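/- Consider the Fuchsian equation t·∂_t²v + 2·∂_t v = α(t,x) + t·P(t,x,∂_x)∂_t v + Q(t,x,∂_x)v + t·β(t,x)·(∂_t v)² + (R(t,x,∂_x)v)·t·∂_t v + S(t,x;∇v) near {0}×V ⊂ ℝ_t×ℝⁿ_x, where V ⊂ ℝⁿ is open, α and β are real-analytic functions, P, Q, R are linear partial differential operators in x (commuting with multiplication by t) of orders 1, 2 and 1 respectively with real-analytic coefficients, and S(t,x;ξ) is a quadratic form in ξ ∈ ℝⁿ with real-analytic coefficients in (t,x). Then for every real-analytic function v₀ on V, this equation has a unique real-analytic solution v(t,x) in a neighborhood of {0}×V satisfying v(0,x) = v₀(x). -/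

import Mathlib

open Real Filter

/-- partial derivative in `t` of a function `v(t,x)` -/
noncomputable def ptd {n : ℕ} (v : ℝ → (Fin n → ℝ) → ℝ) (t : ℝ) (x : Fin n → ℝ) : ℝ :=
  deriv (fun s => v s x) t

/-- partial derivative in `x i` of a function `v(t,x)` -/
noncomputable def pxd {n : ℕ} (i : Fin n) (v : ℝ → (Fin n → ℝ) → ℝ) (t : ℝ)
    (x : Fin n → ℝ) : ℝ :=
  deriv (fun y => v t (Function.update x i y)) (x i)

/-- `v` satisfies the Fuchsian equation of weight 1
`t v_tt + 2 v_t = α + t P(∂_x) v_t + Q(∂_x) v + t β (v_t)² + (R(∂_x)v)·t v_t + S(t,x;∇v)`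
at every point of `S`, where the first-order operator `P` has coefficients `p0, p`, the
second-order operator `Q` has coefficients `q0, q1, q2`, the first-order operator `R` has
coefficients `r0, r`, and the quadratic form `S` has coefficients `s`. -/
def SolvesFuchs {n : ℕ} (α β p0 r0 q0 : ℝ → (Fin n → ℝ) → ℝ)
    (p r q1 : Fin n → ℝ → (Fin n → ℝ) → ℝ) (q2 s : Fin n → Fin n → ℝ → (Fin n → ℝ) → ℝ)
    (v : ℝ → (Fin n → ℝ) → ℝ) (S : Set (ℝ × (Fin n → ℝ))) : Prop :=
  ∀ t x, (t, x) ∈ S →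
    t * ptd (ptd v) t x + 2 * ptd v t x =
      α t x
      + t * (p0 t x * ptd v t x + ∑ i, p i t x * pxd i (ptd v) t x)
      + (q0 t x * v t x + ∑ i, q1 i t x * pxd i v t x
          + ∑ i, ∑ j, q2 i j t x * pxd i (pxd j v) t x)
      + t * β t x * ptd v t x ^ 2
      + (r0 t x * v t x + ∑ i, r i t x * pxd i v t x) * (t * ptd v t x)
      + ∑ i, ∑ j, s i j t x * pxd i v t x * pxd j v t x

/-!
A solution with `v(0,x) = v₀(x)` is a power series `v = v₀ + w` with `w` divisible by `t`. On such
series `t ∂_t² + 2 ∂_t` acts on `t^(k+1)` as `(k+1)(k+2) t^k`, so it has an inverse `J`, and the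
equation becomes the fixed point equation `F = rhs (v₀ + J F)`. Its right-hand side is contracting
in the `t`-adic sense, which gives existence and uniqueness of a formal solution.

For convergence, the weight `δ^k R^l / C(2k+l, l)` of a monomial of degree `k` in `t` and `l` in `x`
is submultiplicative, while two `x`-derivatives cost no more than the two powers of the degree
gained by `J` and one factor `δ`. In the corresponding `ℓ¹` norm the operators `J`, `t ∂_t J`,
`∂_i J`, `t ∂_i ∂_t J` and `∂_i ∂_j J` are therefore small as `δ → 0`, so the norms of the iterates
stay bounded. The germs at the points of `{0} × V` glue by the identity theorem.
-/

namespace Fuchs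

open MvPowerSeries Finsupp
open Finset.HasAntidiagonal (antidiagonal mem_antidiagonal)
open scoped NNReal ENNReal Topology

/-! ### Weighted ℓ¹ norms of power series -/

section WeightedNorm

variable {σ A : Type*} [NormedRing A]

/-- The `ℓ¹` norm of a power series with respect to a weight on its monomials; it is `⊤` when the
weighted sum diverges. -/
noncomputable def weightedNorm (w : (σ →₀ ℕ) → ℝ≥0) (F : MvPowerSeries σ A) : ℝ≥0∞ :=
  ∑' m, ‖coeff m F‖ₑ * w m

theorem weightedNorm_zero (w : (σ →₀ ℕ) → ℝ≥0) : weightedNorm w (0 : MvPowerSeries σ A) = 0 := by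
  simp [weightedNorm]

theorem weightedNorm_add_le (w : (σ →₀ ℕ) → ℝ≥0) (F G : MvPowerSeries σ A) :
    weightedNorm w (F + G) ≤ weightedNorm w F + weightedNorm w G := by
  simp only [weightedNorm, ← ENNReal.tsum_add, ← add_mul, map_add]
  gcongr
  exact enorm_add_le _ _

theorem weightedNorm_sum_le {κ : Type*} (w : (σ →₀ ℕ) → ℝ≥0) (s : Finset κ)
    (F : κ → MvPowerSeries σ A) :
    weightedNorm w (∑ k ∈ s, F k) ≤ ∑ k ∈ s, weightedNorm w (F k) :=
  Finset.le_sum_of_subadditive _ (weightedNorm_zero w).le (weightedNorm_add_le w) s F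

theorem ennreal_tsum_mul_tsum_eq_tsum_sum_antidiagonal {M : Type*} [AddMonoid M]
    [Finset.HasAntidiagonal M] (f g : M → ℝ≥0∞) :
    (∑' a, f a) * ∑' b, g b = ∑' m, ∑ p ∈ antidiagonal m, f p.1 * g p.2 := by
  rw [← ENNReal.tsum_mul_right]
  simp_rw [← ENNReal.tsum_mul_left]
  rw [← ENNReal.tsum_prod (f := fun a b => f a * g b),
    ← Finset.HasAntidiagonal.sigmaAntidiagonalEquivProd.tsum_eq, ENNReal.tsum_sigma']
  exact tsum_congr fun m => Finset.tsum_subtype (antidiagonal m) fun p => f p.1 * g p.2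

theorem weightedNorm_mul_le {w : (σ →₀ ℕ) → ℝ≥0}
    (hw : ∀ a b, w (a + b) ≤ w a * w b) (F G : MvPowerSeries σ A) :
    weightedNorm w (F * G) ≤ weightedNorm w F * weightedNorm w G := by
  classical
  rw [weightedNorm, weightedNorm, weightedNorm, ennreal_tsum_mul_tsum_eq_tsum_sum_antidiagonal]
  refine ENNReal.tsum_le_tsum fun m => ?_
  rw [coeff_mul]
  calc ‖∑ p ∈ antidiagonal m, coeff p.1 F * coeff p.2 G‖ₑ * w m
      ≤ (∑ p ∈ antidiagonal m, ‖coeff p.1 F * coeff p.2 G‖ₑ) * w m := by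
        gcongr
        exact enorm_sum_le _ _
    _ = ∑ p ∈ antidiagonal m, ‖coeff p.1 F * coeff p.2 G‖ₑ * w m := Finset.sum_mul ..
    _ ≤ ∑ p ∈ antidiagonal m, ‖coeff p.1 F‖ₑ * w p.1 * (‖coeff p.2 G‖ₑ * w p.2) := by
        refine Finset.sum_le_sum fun p hp => ?_
        have hwm : (w m : ℝ≥0∞) ≤ w p.1 * w p.2 := by
          rw [← mem_antidiagonal.1 hp]
          exact_mod_cast hw p.1 p.2
        rw [mul_mul_mul_comm]
        gcongr
        exact ENNReal.coe_le_coe.2 (nnnorm_mul_le _ _)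

theorem weightedNorm_mono {w w' : (σ →₀ ℕ) → ℝ≥0} (h : w ≤ w') (F : MvPowerSeries σ A) :
    weightedNorm w F ≤ weightedNorm w' F := by
  unfold weightedNorm
  gcongr with m
  exact h m

theorem weightedNorm_le_of_shift {w w' : (σ →₀ ℕ) → ℝ≥0} {F G : MvPowerSeries σ A}
    {a b : σ →₀ ℕ} {c : (σ →₀ ℕ) → ℝ≥0} {C : ℝ≥0} (ha : ∀ m, ¬ a ≤ m → coeff m G = 0)
    (hG : ∀ m, ‖coeff (m + a) G‖₊ ≤ c m * ‖coeff (m + b) F‖₊)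
    (hc : ∀ m, c m * w (m + a) ≤ C * w' (m + b)) :
    weightedNorm w G ≤ C * weightedNorm w' F := by
  have hsupp : Function.support (fun m => ‖coeff m G‖ₑ * (w m : ℝ≥0∞)) ⊆ Set.range (· + a) := by
    refine Function.support_subset_iff'.2 fun m hm => ?_
    rw [ha m fun h => hm ⟨m - a, tsub_add_cancel_of_le h⟩, enorm_zero, zero_mul]
  have hterm (m) : ‖coeff (m + a) G‖₊ * w (m + a) ≤ C * (‖coeff (m + b) F‖₊ * w' (m + b)) :=
    calc ‖coeff (m + a) G‖₊ * w (m + a)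
        ≤ c m * ‖coeff (m + b) F‖₊ * w (m + a) := by gcongr; exact hG m
      _ = ‖coeff (m + b) F‖₊ * (c m * w (m + a)) := by ring
      _ ≤ ‖coeff (m + b) F‖₊ * (C * w' (m + b)) := mul_le_mul_right (hc m) _
      _ = C * (‖coeff (m + b) F‖₊ * w' (m + b)) := by ring
  calc weightedNorm w G = ∑' m, ‖coeff (m + a) G‖ₑ * (w (m + a) : ℝ≥0∞) :=
        ((add_left_injective a).tsum_eq hsupp).symm
    _ ≤ ∑' m, C * (‖coeff (m + b) F‖ₑ * (w' (m + b) : ℝ≥0∞)) :=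
        ENNReal.tsum_le_tsum fun m => by
          simpa only [enorm_eq_nnnorm, ← ENNReal.coe_mul, ENNReal.coe_le_coe] using hterm m
    _ = C * ∑' m, ‖coeff (m + b) F‖ₑ * (w' (m + b) : ℝ≥0∞) := ENNReal.tsum_mul_left
    _ ≤ C * weightedNorm w' F := by
        gcongr
        exact ENNReal.tsum_comp_le_tsum_of_injective (add_left_injective b) fun m =>
          ‖coeff m F‖ₑ * (w' m : ℝ≥0∞)

end WeightedNorm

/-! ### Convergent power series -/

section IsConvergent

variable {σ A : Type*}

/-- The weight of a polydisc of radius `r`: a monomial has its supremum norm as weight. -/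
noncomputable def degreeWeight (r : ℝ≥0) (m : σ →₀ ℕ) : ℝ≥0 := r ^ m.degree

theorem degreeWeight_add (r : ℝ≥0) (a b : σ →₀ ℕ) :
    degreeWeight r (a + b) = degreeWeight r a * degreeWeight r b := by
  rw [degreeWeight, map_add, pow_add, degreeWeight, degreeWeight]

theorem degreeWeight_mono {r r' : ℝ≥0} (h : r ≤ r') :
    (degreeWeight r : (σ →₀ ℕ) → ℝ≥0) ≤ degreeWeight r' :=
  fun _ => pow_le_pow_left' h _

section NormedRing

variable [NormedRing A]

/-- A power series is convergent if it converges absolutely on some polydisc. -/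
def IsConvergent (F : MvPowerSeries σ A) : Prop :=
  ∃ r : ℝ≥0, 0 < r ∧ weightedNorm (degreeWeight r) F ≠ ⊤

theorem isConvergent_iff_eventually {F : MvPowerSeries σ A} :
    IsConvergent F ↔ ∀ᶠ r in 𝓝[>] 0, weightedNorm (degreeWeight r) F ≠ ⊤ := by
  refine ⟨fun ⟨r, hr, hF⟩ => ?_, fun h => (h.and self_mem_nhdsWithin).exists.imp fun r h => h.symm⟩
  filter_upwards [Ioc_mem_nhdsGT hr] with r' hr'
  exact ne_top_of_le_ne_top hF (weightedNorm_mono (degreeWeight_mono hr'.2) F)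

variable {F G : MvPowerSeries σ A}

theorem IsConvergent.add (hF : IsConvergent F) (hG : IsConvergent G) : IsConvergent (F + G) := by
  rw [isConvergent_iff_eventually] at *
  filter_upwards [hF, hG] with r hr hr'
  exact ne_top_of_le_ne_top (ENNReal.add_ne_top.2 ⟨hr, hr'⟩) (weightedNorm_add_le _ F G)

theorem IsConvergent.mul (hF : IsConvergent F) (hG : IsConvergent G) : IsConvergent (F * G) := by
  classical
  rw [isConvergent_iff_eventually] at *
  filter_upwards [hF, hG] with r hr hr'
  exact ne_top_of_le_ne_top (ENNReal.mul_ne_top hr hr')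
    (weightedNorm_mul_le (fun a b => (degreeWeight_add r a b).le) F G)

theorem isConvergent_monomial (k : σ →₀ ℕ) (a : A) : IsConvergent (monomial k a) := by
  classical
  refine ⟨1, one_pos, ?_⟩
  rw [weightedNorm, tsum_eq_single k fun m hm => by rw [coeff_monomial_ne hm, enorm_zero, zero_mul]]
  exact ENNReal.mul_ne_top enorm_ne_top ENNReal.coe_ne_top

theorem exists_forall_weightedNorm_le {κ : Type*} [Finite κ] {F : κ → MvPowerSeries σ A}
    (hF : ∀ k, IsConvergent (F k)) :
    ∃ r M : ℝ≥0, 0 < r ∧ ∀ k, weightedNorm (degreeWeight r) (F k) ≤ M := by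
  obtain ⟨r, hF, hr⟩ := ((Filter.eventually_all.2 fun k =>
    isConvergent_iff_eventually.1 (hF k)).and self_mem_nhdsWithin).exists
  lift (fun k => weightedNorm (degreeWeight r) (F k)) to κ → ℝ≥0 using hF with N hN
  obtain ⟨M, hM⟩ := (Set.finite_range N).bddAbove
  exact ⟨r, M, hr, fun k => by
    rw [← congrFun hN k]
    exact ENNReal.coe_le_coe.2 (hM (Set.mem_range_self k))⟩

end NormedRing

theorem isConvergent_X [NormedCommRing A] (s : σ) : IsConvergent (X s : MvPowerSeries σ A) :=
  isConvergent_monomial _ _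

theorem nnnorm_coeff_pderiv {𝕜 : Type*} [RCLike 𝕜] (s : σ) (F : MvPowerSeries σ 𝕜) (m : σ →₀ ℕ) :
    ‖coeff m (pderiv 𝕜 s F)‖₊ = ‖coeff (m + single s 1) F‖₊ * (m s + 1) := by
  rw [coeff_pderiv, nnnorm_mul, ← Nat.cast_succ, RCLike.nnnorm_natCast, Nat.cast_succ]

theorem mul_degreeWeight_half_le (r : ℝ≥0) (s : σ) (m : σ →₀ ℕ) :
    (m s + 1) * (degreeWeight (r / 2) m * (r / 2)) ≤ degreeWeight r (m + single s 1) := by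
  have hm : m s + 1 ≤ 2 ^ (m.degree + 1) :=
    (Nat.succ_le_succ (le_degree s m)).trans Nat.lt_two_pow_self.le
  calc (m s + 1) * (degreeWeight (r / 2) m * (r / 2))
      ≤ 2 ^ (m.degree + 1) * (degreeWeight (r / 2) m * (r / 2)) := by
        gcongr
        exact_mod_cast hm
    _ = degreeWeight r (m + single s 1) := by
        rw [degreeWeight, degreeWeight, map_add, degree_single, ← pow_succ, ← mul_pow,
          mul_div_cancel₀ r two_ne_zero]

theorem IsConvergent.pderiv {𝕜 : Type*} [RCLike 𝕜] {F : MvPowerSeries σ 𝕜} (hF : IsConvergent F)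
    (s : σ) : IsConvergent (pderiv 𝕜 s F) := by
  obtain ⟨r, hr, hF⟩ := hF
  have hr2 : 0 < r / 2 := half_pos hr
  have hle : weightedNorm (degreeWeight (r / 2)) (MvPowerSeries.pderiv 𝕜 s F) ≤
      ((r / 2)⁻¹ : ℝ≥0) * weightedNorm (degreeWeight r) F := by
    refine weightedNorm_le_of_shift (a := 0) (b := single s 1) (c := fun m => m s + 1)
      (fun m hm => absurd (zero_le : 0 ≤ m) hm) (fun m => ?_) fun m => ?_
    · rw [add_zero, nnnorm_coeff_pderiv, mul_comm]
    · rw [add_zero, le_inv_mul_iff₀' hr2, mul_assoc]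
      exact mul_degreeWeight_half_le r s m
  exact ⟨r / 2, hr2, ne_top_of_le_ne_top (ENNReal.mul_ne_top ENNReal.coe_ne_top hF) hle⟩

end IsConvergent

/-! ### The binomial weights -/

section BinomialWeight

/-- The weight `δ ^ k R ^ l / C(2k + l, l)` of a monomial of degree `k` in `t` and `l` in `x`.
Dividing by the binomial coefficient makes two `x`-derivatives cost two factors of order `k`, which
is what inverting `t ∂ₜ² + 2 ∂ₜ` gains, while keeping the weight submultiplicative. -/
noncomputable def binomialWeight (δ R : ℝ≥0) (k l : ℕ) : ℝ≥0 :=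
  δ ^ k * R ^ l / (2 * k + l).choose l

variable {δ R : ℝ≥0}

theorem choose_two_mul_add_pos (k l : ℕ) : (0 : ℝ≥0) < (2 * k + l).choose l := by
  exact_mod_cast Nat.choose_pos (Nat.le_add_left l _)

theorem choose_mul_choose_le_choose_add (a b c d : ℕ) :
    a.choose b * c.choose d ≤ (a + c).choose (b + d) := by
  rw [Nat.add_choose_eq]
  exact Finset.single_le_sum (f := fun p : ℕ × ℕ => a.choose p.1 * c.choose p.2)
    (fun _ _ => Nat.zero_le _) (mem_antidiagonal.2 rfl : (b, d) ∈ antidiagonal (b + d))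

theorem binomialWeight_add_le (k l k' l' : ℕ) :
    binomialWeight δ R (k + k') (l + l') ≤ binomialWeight δ R k l * binomialWeight δ R k' l' := by
  have hchoose : ((2 * k + l).choose l : ℝ≥0) * (2 * k' + l').choose l' ≤
      (2 * (k + k') + (l + l')).choose (l + l') := by
    rw [show 2 * (k + k') + (l + l') = 2 * k + l + (2 * k' + l') by ring]
    exact_mod_cast choose_mul_choose_le_choose_add _ _ _ _
  rw [binomialWeight, binomialWeight, binomialWeight, div_mul_div_comm, mul_mul_mul_comm, ← pow_add,
    ← pow_add]
  exact div_le_div_of_nonneg_left zero_le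
    (mul_pos (choose_two_mul_add_pos k l) (choose_two_mul_add_pos k' l')) hchoose

theorem binomialWeight_succ_left_le (k l : ℕ) :
    binomialWeight δ R (k + 1) l ≤ δ * binomialWeight δ R k l := by
  have hchoose : ((2 * k + l).choose l : ℝ≥0) ≤ (2 * (k + 1) + l).choose l := by
    exact_mod_cast Nat.choose_le_choose _ (by lia)
  calc δ ^ (k + 1) * R ^ l / (2 * (k + 1) + l).choose l
      ≤ δ ^ (k + 1) * R ^ l / (2 * k + l).choose l :=
        div_le_div_of_nonneg_left zero_le (choose_two_mul_add_pos k l) hchoose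
    _ = δ * (δ ^ k * R ^ l / (2 * k + l).choose l) := by ring

theorem mul_binomialWeight_succ_left_le (hR : 0 < R) (k l : ℕ) :
    (l + 1) / (k + 1) * binomialWeight δ R (k + 1) l ≤
      2 * δ / R * binomialWeight δ R k (l + 1) := by
  have hchoose : ((l : ℝ≥0) + 1) * (2 * k + (l + 1)).choose (l + 1) ≤
      2 * (k + 1) * (2 * (k + 1) + l).choose l := by
    have hsucc := Nat.choose_succ_right_eq (2 * (k + 1) + l) l
    have hmono : (2 * k + (l + 1)).choose (l + 1) ≤ (2 * (k + 1) + l).choose (l + 1) :=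
      Nat.choose_le_choose _ (by lia)
    rw [Nat.add_sub_cancel] at hsucc
    norm_cast
    nlinarith
  have h₁ := choose_two_mul_add_pos k (l + 1)
  have h₂ := choose_two_mul_add_pos (k + 1) l
  calc (l + 1) / (k + 1) * (δ ^ (k + 1) * R ^ l / (2 * (k + 1) + l).choose l)
      = δ ^ (k + 1) * R ^ l * ((l + 1) / ((k + 1) * (2 * (k + 1) + l).choose l)) := by
        field_simp
    _ ≤ δ ^ (k + 1) * R ^ l * (2 / (2 * k + (l + 1)).choose (l + 1)) := by
        refine mul_le_mul_right ?_ _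
        rw [div_le_div_iff₀ (by positivity) h₁]
        linarith
    _ = 2 * δ / R * (δ ^ k * R ^ (l + 1) / (2 * k + (l + 1)).choose (l + 1)) := by
        field_simp
        ring

theorem mul_mul_binomialWeight_succ_left_le (hR : 0 < R) (k l : ℕ) :
    (l + 1) * (l + 2) / ((k + 1) * (k + 2)) * binomialWeight δ R (k + 1) l ≤
      4 * δ / R ^ 2 * binomialWeight δ R k (l + 2) := by
  have hchoose : ((l : ℝ≥0) + 1) * (l + 2) * (2 * k + (l + 2)).choose (l + 2) ≤
      4 * ((k + 1) * (k + 2)) * (2 * (k + 1) + l).choose l := by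
    have h₁ := Nat.choose_succ_right_eq (2 * (k + 1) + l) l
    have h₂ := Nat.choose_succ_right_eq (2 * (k + 1) + l) (l + 1)
    rw [Nat.add_sub_cancel] at h₁
    rw [show 2 * (k + 1) + l - (l + 1) = 2 * k + 1 by lia] at h₂
    rw [show 2 * k + (l + 2) = 2 * (k + 1) + l by ring]
    norm_cast
    calc (l + 1) * (l + 2) * (2 * (k + 1) + l).choose (l + 2)
        = (l + 1) * ((2 * (k + 1) + l).choose (l + 1 + 1) * (l + 1 + 1)) := by ring
      _ = (2 * k + 1) * ((2 * (k + 1) + l).choose (l + 1) * (l + 1)) := by rw [h₂]; ring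
      _ = (2 * k + 1) * (2 * (k + 1)) * (2 * (k + 1) + l).choose l := by rw [h₁]; ring
      _ ≤ 4 * ((k + 1) * (k + 2)) * (2 * (k + 1) + l).choose l :=
        Nat.mul_le_mul_right _ (by nlinarith)
  have h₁ := choose_two_mul_add_pos k (l + 2)
  have h₂ := choose_two_mul_add_pos (k + 1) l
  calc (l + 1) * (l + 2) / ((k + 1) * (k + 2)) *
        (δ ^ (k + 1) * R ^ l / (2 * (k + 1) + l).choose l)
      = δ ^ (k + 1) * R ^ l *
          ((l + 1) * (l + 2) / ((k + 1) * (k + 2) * (2 * (k + 1) + l).choose l)) := by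
        field_simp
    _ ≤ δ ^ (k + 1) * R ^ l * (4 / (2 * k + (l + 2)).choose (l + 2)) := by
        refine mul_le_mul_right ?_ _
        rw [div_le_div_iff₀ (by positivity) h₁]
        linarith
    _ = 4 * δ / R ^ 2 * (δ ^ k * R ^ (l + 2) / (2 * k + (l + 2)).choose (l + 2)) := by
        field_simp
        ring

theorem binomialWeight_le_pow {r : ℝ≥0} (hδ : δ ≤ r) (hR : R ≤ r) (k l : ℕ) :
    binomialWeight δ R k l ≤ r ^ (k + l) := by
  have hchoose : (1 : ℝ≥0) ≤ (2 * k + l).choose l := by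
    exact_mod_cast Nat.choose_pos (Nat.le_add_left l _)
  calc δ ^ k * R ^ l / (2 * k + l).choose l ≤ δ ^ k * R ^ l := div_le_self zero_le hchoose
    _ ≤ r ^ k * r ^ l := by gcongr
    _ = r ^ (k + l) := (pow_add r k l).symm

theorem pow_le_binomialWeight {r : ℝ≥0} (hδ : 4 * r ≤ δ) (hR : 2 * r ≤ R) (k l : ℕ) :
    r ^ (k + l) ≤ binomialWeight δ R k l := by
  have hchoose : ((2 * k + l).choose l : ℝ≥0) ≤ 4 ^ k * 2 ^ l := by
    have htwo := Nat.choose_le_two_pow (2 * k + l) l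
    rw [pow_add, pow_mul] at htwo
    exact_mod_cast htwo
  rw [binomialWeight, le_div_iff₀ (choose_two_mul_add_pos k l)]
  calc r ^ (k + l) * (2 * k + l).choose l ≤ r ^ (k + l) * (4 ^ k * 2 ^ l) := by gcongr
    _ = (4 * r) ^ k * (2 * r) ^ l := by ring
    _ ≤ δ ^ k * R ^ l := by gcongr

variable {ι : Type*}

/-- The binomial weight of a monomial in the variables `t = X none` and `xᵢ = X (some i)`. -/
noncomputable def monomialWeight (δ R : ℝ≥0) (m : Option ι →₀ ℕ) : ℝ≥0 :=
  binomialWeight δ R (m none) m.some.degree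

theorem degree_eq_none_add_degree_some (m : Option ι →₀ ℕ) :
    m.degree = m none + m.some.degree := by
  simpa only [Finsupp.sum, degree_apply, smul_eq_mul, mul_one] using
    sum_option_index_smul m fun _ => (1 : ℕ)

theorem monomialWeight_add_le (a b : Option ι →₀ ℕ) :
    monomialWeight δ R (a + b) ≤ monomialWeight δ R a * monomialWeight δ R b := by
  simpa only [monomialWeight, Finsupp.add_apply, some_add, map_add] using
    binomialWeight_add_le _ _ _ _

theorem monomialWeight_add_single_none (m : Option ι →₀ ℕ) :
    monomialWeight δ R (m + single none 1) = binomialWeight δ R (m none + 1) m.some.degree := by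
  simp [monomialWeight]

theorem monomialWeight_add_single_some (m : Option ι →₀ ℕ) (i : ι) :
    monomialWeight δ R (m + single (some i) 1) =
      binomialWeight δ R (m none) (m.some.degree + 1) := by
  simp [monomialWeight]

theorem monomialWeight_le_degreeWeight {r : ℝ≥0} (hδ : δ ≤ r) (hR : R ≤ r) :
    monomialWeight δ R ≤ degreeWeight (σ := Option ι) r := fun m => by
  rw [degreeWeight, degree_eq_none_add_degree_some]
  exact binomialWeight_le_pow hδ hR _ _

theorem degreeWeight_le_monomialWeight {r : ℝ≥0} (hδ : 4 * r ≤ δ) (hR : 2 * r ≤ R) :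
    degreeWeight (σ := Option ι) r ≤ monomialWeight δ R := fun m => by
  rw [degreeWeight, degree_eq_none_add_degree_some]
  exact pow_le_binomialWeight hδ hR _ _

end BinomialWeight

/-! ### Inverting the Fuchsian operator on formal power series -/

section Divisibility

variable {σ A : Type*} [CommSemiring A] {s i : σ} {F : MvPowerSeries σ A} {k : ℕ}

theorem coeff_X_mul_add_single (s : σ) (F : MvPowerSeries σ A) (m : σ →₀ ℕ) :
    coeff (m + single s 1) (X s * F) = coeff m F := by
  rw [X, add_comm, coeff_add_monomial_mul, one_mul]

theorem coeff_eq_zero_of_X_dvd (hF : X s ∣ F) (m : σ →₀ ℕ) (hm : ¬ single s 1 ≤ m) :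
    coeff m F = 0 :=
  X_dvd_iff.1 hF m (by rwa [Finsupp.single_le_iff, Nat.one_le_iff_ne_zero, not_not] at hm)

theorem exists_eq_add_single_of_ne_zero {m : σ →₀ ℕ} (hm : m s ≠ 0) :
    ∃ m', m = m' + single s 1 :=
  ⟨m - single s 1, (sub_add_single_one_cancel hm).symm⟩

theorem X_pow_dvd_pderiv_of_ne (h : i ≠ s) (hF : X s ^ k ∣ F) : X s ^ k ∣ pderiv A i F := by
  rw [X_pow_dvd_iff] at hF ⊢
  intro m hm
  rw [coeff_pderiv, hF _ (by simpa [single_eq_of_ne' h] using hm), zero_mul]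

theorem X_dvd_pderiv_of_ne (h : i ≠ s) (hF : X s ∣ F) : X s ∣ pderiv A i F := by
  rw [← pow_one (X s)] at hF ⊢
  exact X_pow_dvd_pderiv_of_ne h hF

theorem X_pow_dvd_pderiv_self (hF : X s ^ (k + 1) ∣ F) : X s ^ k ∣ pderiv A s F := by
  rw [X_pow_dvd_iff] at hF ⊢
  intro m hm
  rw [coeff_pderiv, hF _ (by simpa using hm), zero_mul]

theorem X_pow_succ_dvd_X_mul (hF : X s ^ k ∣ F) : X s ^ (k + 1) ∣ X s * F :=
  pow_succ' (X s : MvPowerSeries σ A) k ▸ mul_dvd_mul_left _ hF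

theorem eq_zero_of_forall_X_pow_dvd (s : σ) (h : ∀ k : ℕ, X s ^ k ∣ F) : F = 0 := by
  ext m
  exact X_pow_dvd_iff.1 (h (m s + 1)) m (Nat.lt_succ_self _)

end Divisibility

section FuchsInverse

variable {ι 𝕜 : Type*} [RCLike 𝕜]

/-- The operator `t ∂ₜ² + 2 ∂ₜ` on power series in `t = X none` and `xᵢ = X (some i)`. -/
noncomputable def fuchsOp (F : MvPowerSeries (Option ι) 𝕜) : MvPowerSeries (Option ι) 𝕜 :=
  X none * pderiv 𝕜 none (pderiv 𝕜 none F) + 2 * pderiv 𝕜 none F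

/-- The inverse of `t ∂ₜ² + 2 ∂ₜ` on power series vanishing at `t = 0`: it maps `t ^ k x ^ a` to
`t ^ (k + 1) x ^ a / ((k + 1) (k + 2))`. The coefficients with `m none = 0` are `0⁻¹ • _ = 0`. -/
noncomputable def fuchsInv : MvPowerSeries (Option ι) 𝕜 →ₗ[𝕜] MvPowerSeries (Option ι) 𝕜 :=
  LinearMap.pi fun m => ((m none : 𝕜) * (m none + 1))⁻¹ • coeff (m - single none 1)

variable (F : MvPowerSeries (Option ι) 𝕜) (m : Option ι →₀ ℕ) (i j : ι)

theorem coeff_fuchsInv :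
    coeff m (fuchsInv F) = ((m none : 𝕜) * (m none + 1))⁻¹ * coeff (m - single none 1) F :=
  rfl

theorem coeff_fuchsInv_add_single :
    coeff (m + single none 1) (fuchsInv F) = coeff m F / ((m none + 1) * (m none + 2)) := by
  rw [coeff_fuchsInv, add_tsub_cancel_right, Finsupp.add_apply, single_eq_same, Nat.cast_add,
    Nat.cast_one, add_assoc, one_add_one_eq_two, inv_mul_eq_div]

theorem X_dvd_fuchsInv : X none ∣ fuchsInv F :=
  X_dvd_iff.2 fun m hm => by rw [coeff_fuchsInv, hm, Nat.cast_zero, zero_mul, inv_zero, zero_mul]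

variable {F} in
theorem X_pow_succ_dvd_fuchsInv {k : ℕ} (hF : X none ^ k ∣ F) :
    X none ^ (k + 1) ∣ fuchsInv F := by
  refine X_pow_dvd_iff.2 fun m hm => ?_
  by_cases h0 : m none = 0
  · exact X_dvd_iff.1 (X_dvd_fuchsInv F) m h0
  · obtain ⟨m, rfl⟩ := exists_eq_add_single_of_ne_zero h0
    rw [coeff_fuchsInv_add_single, X_pow_dvd_iff.1 hF m (by simpa using hm), zero_div]

theorem coeff_fuchsOp :
    coeff m (fuchsOp F) = (m none + 1) * (m none + 2) * coeff (m + single none 1) F := by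
  rw [fuchsOp, two_mul, map_add, map_add, coeff_pderiv]
  by_cases h0 : m none = 0
  · rw [X_dvd_iff.1 (dvd_mul_right _ _) m h0, h0]
    push_cast
    ring
  · obtain ⟨m, rfl⟩ := exists_eq_add_single_of_ne_zero h0
    rw [coeff_X_mul_add_single, coeff_pderiv, coeff_pderiv, Finsupp.add_apply, single_eq_same]
    push_cast
    ring

theorem fuchsOp_fuchsInv : fuchsOp (fuchsInv F) = F := by
  ext m
  have h₁ : (m none : 𝕜) + 1 ≠ 0 := by exact_mod_cast (m none).succ_ne_zero
  have h₂ : (m none : 𝕜) + 2 ≠ 0 := by exact_mod_cast (m none + 1).succ_ne_zero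
  rw [coeff_fuchsOp, coeff_fuchsInv_add_single, mul_div_cancel₀ _ (mul_ne_zero h₁ h₂)]

variable {F} in
theorem fuchsInv_fuchsOp (hF : X none ∣ F) : fuchsInv (fuchsOp F) = F := by
  ext m
  by_cases h0 : m none = 0
  · rw [X_dvd_iff.1 (X_dvd_fuchsInv _) m h0, X_dvd_iff.1 hF m h0]
  · obtain ⟨m, rfl⟩ := exists_eq_add_single_of_ne_zero h0
    have h₁ : (m none : 𝕜) + 1 ≠ 0 := by exact_mod_cast (m none).succ_ne_zero
    have h₂ : (m none : 𝕜) + 2 ≠ 0 := by exact_mod_cast (m none + 1).succ_ne_zero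
    rw [coeff_fuchsInv_add_single, coeff_fuchsOp, mul_div_cancel_left₀ _ (mul_ne_zero h₁ h₂)]

theorem fuchsOp_add_of_pderiv_eq_zero {g : MvPowerSeries (Option ι) 𝕜}
    (hg : pderiv 𝕜 none g = 0) : fuchsOp (g + F) = fuchsOp F := by
  rw [fuchsOp, fuchsOp, map_add, hg, zero_add]

end FuchsInverse

section FuchsInverseNorm

variable {ι 𝕜 : Type*} [RCLike 𝕜] (F : MvPowerSeries (Option ι) 𝕜) (m : Option ι →₀ ℕ) (i j : ι)

theorem nnnorm_coeff_fuchsInv_add_single :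
    ‖coeff (m + single none 1) (fuchsInv F)‖₊ =
      ‖coeff m F‖₊ / ((m none + 1) * (m none + 2)) := by
  have hcast : ((m none : 𝕜) + 1) * (m none + 2) = ((m none + 1) * (m none + 2) : ℕ) := by
    push_cast
    ring
  rw [coeff_fuchsInv_add_single, hcast, nnnorm_div, RCLike.nnnorm_natCast]
  push_cast
  ring

theorem nnnorm_coeff_pderiv_none_fuchsInv :
    ‖coeff m (pderiv 𝕜 none (fuchsInv F))‖₊ = ‖coeff m F‖₊ / (m none + 2) := by
  rw [nnnorm_coeff_pderiv, nnnorm_coeff_fuchsInv_add_single]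
  field_simp

theorem apply_some_le_degree_some : (m (some i) : ℝ≥0) ≤ m.some.degree := by
  exact_mod_cast le_degree i m.some

variable {δ R : ℝ≥0}

theorem weightedNorm_fuchsInv_le :
    weightedNorm (monomialWeight δ R) (fuchsInv F) ≤
      δ * weightedNorm (monomialWeight δ R) F := by
  refine weightedNorm_le_of_shift (a := single none 1) (b := 0) (c := 1)
    (coeff_eq_zero_of_X_dvd (X_dvd_fuchsInv F)) (fun m => ?_) fun m => ?_
  · rw [nnnorm_coeff_fuchsInv_add_single, add_zero, Pi.one_apply, one_mul]
    exact div_le_self zero_le (by norm_cast; nlinarith)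
  · rw [Pi.one_apply, one_mul, add_zero, monomialWeight_add_single_none]
    exact binomialWeight_succ_left_le _ _

theorem weightedNorm_pderiv_none_fuchsInv_le :
    weightedNorm (monomialWeight δ R) (pderiv 𝕜 none (fuchsInv F)) ≤
      weightedNorm (monomialWeight δ R) F := by
  have h := weightedNorm_le_of_shift (w := monomialWeight δ R) (F := F)
    (G := pderiv 𝕜 none (fuchsInv F)) (a := 0) (b := 0) (c := 1) (C := 1)
    (fun m hm => absurd (zero_le : 0 ≤ m) hm) (fun m => ?_) fun m => le_rfl
  · rwa [ENNReal.coe_one, one_mul] at h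
  · rw [add_zero, nnnorm_coeff_pderiv_none_fuchsInv, Pi.one_apply, one_mul]
    exact div_le_self zero_le (by norm_cast; lia)

theorem weightedNorm_X_mul_pderiv_none_fuchsInv_le :
    weightedNorm (monomialWeight δ R) (X none * pderiv 𝕜 none (fuchsInv F)) ≤
      δ * weightedNorm (monomialWeight δ R) F := by
  refine weightedNorm_le_of_shift (a := single none 1) (b := 0) (c := 1)
    (coeff_eq_zero_of_X_dvd (dvd_mul_right _ _)) (fun m => ?_) fun m => ?_
  · rw [coeff_X_mul_add_single, nnnorm_coeff_pderiv_none_fuchsInv, add_zero, Pi.one_apply, one_mul]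
    exact div_le_self zero_le (by norm_cast; lia)
  · rw [Pi.one_apply, one_mul, add_zero, monomialWeight_add_single_none]
    exact binomialWeight_succ_left_le _ _

theorem weightedNorm_pderiv_some_fuchsInv_le (hR : 0 < R) :
    weightedNorm (monomialWeight δ R) (pderiv 𝕜 (some i) (fuchsInv F)) ≤
      (2 * δ / R : ℝ≥0) * weightedNorm (monomialWeight δ R) F := by
  refine weightedNorm_le_of_shift (a := single none 1) (b := single (some i) 1)
    (c := fun m => (m.some.degree + 1) / (m none + 1))
    (coeff_eq_zero_of_X_dvd (X_dvd_pderiv_of_ne (Option.some_ne_none i) (X_dvd_fuchsInv F)))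
    (fun m => ?_) fun m => ?_
  · have hm := apply_some_le_degree_some m i
    rw [nnnorm_coeff_pderiv, add_right_comm, nnnorm_coeff_fuchsInv_add_single]
    simp only [Finsupp.add_apply, ne_eq, reduceCtorEq, not_false_eq_true, single_eq_of_ne, add_zero]
    calc ‖coeff (m + single (some i) 1) F‖₊ / ((m none + 1) * (m none + 2)) * (m (some i) + 1)
        ≤ ‖coeff (m + single (some i) 1) F‖₊ / ((m none + 1) * 1) * (m.some.degree + 1) := by
          gcongr
          norm_cast
          lia
      _ = (m.some.degree + 1) / (m none + 1) * ‖coeff (m + single (some i) 1) F‖₊ := by ring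
  · rw [monomialWeight_add_single_none, monomialWeight_add_single_some]
    exact mul_binomialWeight_succ_left_le hR _ _

theorem weightedNorm_X_mul_pderiv_some_pderiv_none_fuchsInv_le (hR : 0 < R) :
    weightedNorm (monomialWeight δ R) (X none * pderiv 𝕜 (some i) (pderiv 𝕜 none (fuchsInv F))) ≤
      (2 * δ / R : ℝ≥0) * weightedNorm (monomialWeight δ R) F := by
  refine weightedNorm_le_of_shift (a := single none 1) (b := single (some i) 1)
    (c := fun m => (m.some.degree + 1) / (m none + 1)) (coeff_eq_zero_of_X_dvd (dvd_mul_right _ _))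
    (fun m => ?_) fun m => ?_
  · rw [coeff_X_mul_add_single, nnnorm_coeff_pderiv, nnnorm_coeff_pderiv_none_fuchsInv]
    have hm := apply_some_le_degree_some m i
    simp only [Finsupp.add_apply, ne_eq, reduceCtorEq, not_false_eq_true, single_eq_of_ne, add_zero]
    calc ‖coeff (m + single (some i) 1) F‖₊ / (m none + 2) * (m (some i) + 1)
        ≤ ‖coeff (m + single (some i) 1) F‖₊ / (m none + 1) * (m.some.degree + 1) := by
          gcongr
          norm_num
      _ = (m.some.degree + 1) / (m none + 1) * ‖coeff (m + single (some i) 1) F‖₊ := by ring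
  · rw [monomialWeight_add_single_none, monomialWeight_add_single_some]
    exact mul_binomialWeight_succ_left_le hR _ _

theorem weightedNorm_pderiv_some_pderiv_some_fuchsInv_le (hR : 0 < R) :
    weightedNorm (monomialWeight δ R) (pderiv 𝕜 (some i) (pderiv 𝕜 (some j) (fuchsInv F))) ≤
      (4 * δ / R ^ 2 : ℝ≥0) * weightedNorm (monomialWeight δ R) F := by
  refine weightedNorm_le_of_shift (a := single none 1) (b := single (some i) 1 + single (some j) 1)
    (c := fun m => (m.some.degree + 1) * (m.some.degree + 2) / ((m none + 1) * (m none + 2)))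
    (coeff_eq_zero_of_X_dvd (X_dvd_pderiv_of_ne (Option.some_ne_none i)
      (X_dvd_pderiv_of_ne (Option.some_ne_none j) (X_dvd_fuchsInv F))))
    (fun m => ?_) fun m => ?_
  · have hi := apply_some_le_degree_some m i
    have hj := apply_some_le_degree_some (m + single (some i) 1) j
    simp only [some_add, some_single_some, map_add, degree_single, Nat.cast_add,
      Nat.cast_one] at hj
    rw [nnnorm_coeff_pderiv, nnnorm_coeff_pderiv, add_right_comm m, add_right_comm (m + _),
      nnnorm_coeff_fuchsInv_add_single, ← add_assoc]
    simp only [Finsupp.add_apply, ne_eq, reduceCtorEq, not_false_eq_true, single_eq_of_ne,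
      add_zero] at hj ⊢
    calc _ ≤ ‖coeff (m + single (some i) 1 + single (some j) 1) F‖₊ /
            ((m none + 1) * (m none + 2)) * (m.some.degree + 1 + 1) * (m.some.degree + 1) := by
          gcongr
      _ = _ := by ring
  · rw [monomialWeight_add_single_none, ← add_assoc, monomialWeight_add_single_some]
    simpa using mul_mul_binomialWeight_succ_left_le hR (m none) m.some.degree

end FuchsInverseNorm

/-! ### Adic contractions -/

section AdicContraction

variable {σ A : Type*} [CommRing A] {s : σ} {T : MvPowerSeries σ A → MvPowerSeries σ A}

/-- A map of power series is an adic contraction in the variable `s` if it increases the order of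
vanishing of differences in that variable. -/
def IsAdicContraction (s : σ) (T : MvPowerSeries σ A → MvPowerSeries σ A) : Prop :=
  ∀ (k : ℕ) (F G : MvPowerSeries σ A), X s ^ k ∣ F - G → X s ^ (k + 1) ∣ T F - T G

namespace IsAdicContraction

theorem eq_of_isFixedPt (hT : IsAdicContraction s T) {F G : MvPowerSeries σ A}
    (hF : T F = F) (hG : T G = G) : F = G := by
  refine sub_eq_zero.1 (eq_zero_of_forall_X_pow_dvd s fun k => ?_)
  induction k with
  | zero => simp
  | succ k ih => simpa only [hF, hG] using hT k F G ih

theorem X_pow_dvd_iterate_add_sub (hT : IsAdicContraction s T) (k l : ℕ) :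
    X s ^ k ∣ T^[k + l] 0 - T^[k] 0 := by
  induction k with
  | zero => simp
  | succ k ih =>
    rw [Nat.add_right_comm, Function.iterate_succ_apply', Function.iterate_succ_apply']
    exact hT k _ _ ih

/-- The coefficientwise limit of the Picard iterates of an adic contraction. -/
noncomputable def picardLimit (s : σ) (T : MvPowerSeries σ A → MvPowerSeries σ A) :
    MvPowerSeries σ A :=
  fun m => coeff m (T^[m s + 1] 0)

theorem coeff_picardLimit (hT : IsAdicContraction s T) {m : σ →₀ ℕ} {k : ℕ} (hk : m s < k) :
    coeff m (picardLimit s T) = coeff m (T^[k] 0) := by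
  obtain ⟨l, rfl⟩ := Nat.exists_eq_add_of_le (Nat.succ_le_of_lt hk)
  refine (sub_eq_zero.1 ?_).symm
  rw [← map_sub]
  exact X_pow_dvd_iff.1 (hT.X_pow_dvd_iterate_add_sub (m s + 1) l) m (Nat.lt_succ_self _)

theorem X_pow_dvd_picardLimit_sub (hT : IsAdicContraction s T) (k : ℕ) :
    X s ^ k ∣ picardLimit s T - T^[k] 0 :=
  X_pow_dvd_iff.2 fun m hm => by rw [map_sub, hT.coeff_picardLimit hm, sub_self]

theorem isFixedPt_picardLimit (hT : IsAdicContraction s T) :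
    T (picardLimit s T) = picardLimit s T := by
  refine sub_eq_zero.1 (eq_zero_of_forall_X_pow_dvd s fun k => ?_)
  have h := hT k _ _ (hT.X_pow_dvd_picardLimit_sub k)
  rw [← Function.iterate_succ_apply' T] at h
  simpa only [sub_sub_sub_cancel_right] using
    (pow_dvd_pow _ k.le_succ).trans (dvd_sub h (hT.X_pow_dvd_picardLimit_sub (k + 1)))

end IsAdicContraction

theorem IsAdicContraction.weightedNorm_picardLimit_le {σ A : Type*} [NormedCommRing A] {s : σ}
    {T : MvPowerSeries σ A → MvPowerSeries σ A} (hT : IsAdicContraction s T)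
    {w : (σ →₀ ℕ) → ℝ≥0} {K : ℝ≥0∞} (hK : ∀ k, weightedNorm w (T^[k] 0) ≤ K) :
    weightedNorm w (picardLimit s T) ≤ K := by
  rw [weightedNorm, ENNReal.tsum_eq_iSup_sum]
  refine iSup_le fun S => ?_
  set k := S.sup (fun m => m s) + 1
  calc ∑ m ∈ S, ‖coeff m (picardLimit s T)‖ₑ * w m
      = ∑ m ∈ S, ‖coeff m (T^[k] 0)‖ₑ * w m := Finset.sum_congr rfl fun m hm => by
        rw [hT.coeff_picardLimit (Nat.lt_succ_of_le (Finset.le_sup (f := fun m => m s) hm))]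
    _ ≤ weightedNorm w (T^[k] 0) := ENNReal.sum_le_tsum S
    _ ≤ K := hK k

theorem IsAdicContraction.exists_isFixedPt_weightedNorm_le {σ A : Type*} [NormedCommRing A]
    {s : σ} {T : MvPowerSeries σ A → MvPowerSeries σ A} (hT : IsAdicContraction s T)
    {w : (σ →₀ ℕ) → ℝ≥0} {K : ℝ≥0∞}
    (hK : ∀ F, weightedNorm w F ≤ K → weightedNorm w (T F) ≤ K) :
    ∃ F, T F = F ∧ weightedNorm w F ≤ K := by
  refine ⟨picardLimit s T, hT.isFixedPt_picardLimit,
    hT.weightedNorm_picardLimit_le fun k => ?_⟩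
  induction k with
  | zero => exact (weightedNorm_zero w).trans_le zero_le
  | succ k ih => exact Function.iterate_succ_apply' T k 0 ▸ hK _ ih

end AdicContraction

/-! ### Formal solutions -/

section FormalSolution

/-- The factors `v`, `t ∂ₜv`, `t (∂ₜv) ^ 2`, `∂ᵢv`, `t ∂ᵢ∂ₜv`, `∂ᵢ∂ⱼv` of which the monomials on the
right-hand side of a Fuchsian equation are composed. -/
inductive Factor (ι : Type*)
  | val
  | euler
  | eulerSq
  | dx (i : ι)
  | eulerDx (i : ι)
  | dxx (i j : ι)

variable {ι κ 𝕜 : Type*} [RCLike 𝕜]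

instance [Finite ι] : Finite (Factor ι) := by
  let build : Unit ⊕ Unit ⊕ Unit ⊕ ι ⊕ ι ⊕ ι × ι → Factor ι :=
    Sum.elim (fun _ => .val) <| Sum.elim (fun _ => .euler) <| Sum.elim (fun _ => .eulerSq) <|
      Sum.elim .dx <| Sum.elim .eulerDx fun p => .dxx p.1 p.2
  refine .of_surjective build fun φ => ?_
  cases φ with
  | val => exact ⟨.inl (), rfl⟩
  | euler => exact ⟨.inr (.inl ()), rfl⟩
  | eulerSq => exact ⟨.inr (.inr (.inl ())), rfl⟩
  | dx i => exact ⟨.inr (.inr (.inr (.inl i))), rfl⟩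
  | eulerDx i => exact ⟨.inr (.inr (.inr (.inr (.inl i)))), rfl⟩
  | dxx i j => exact ⟨.inr (.inr (.inr (.inr (.inr (i, j))))), rfl⟩

/-- The value of a factor at a formal power series. -/
noncomputable def Factor.series (v : MvPowerSeries (Option ι) 𝕜) :
    Factor ι → MvPowerSeries (Option ι) 𝕜
  | val => v
  | euler => X none * pderiv 𝕜 none v
  | eulerSq => X none * pderiv 𝕜 none v ^ 2
  | dx i => pderiv 𝕜 (some i) v
  | eulerDx i => X none * pderiv 𝕜 (some i) (pderiv 𝕜 none v)
  | dxx i j => pderiv 𝕜 (some i) (pderiv 𝕜 (some j) v)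

theorem X_pow_dvd_X_mul_pderiv {v : MvPowerSeries (Option ι) 𝕜} {k : ℕ}
    (hv : X none ^ k ∣ v) : X none ^ k ∣ X none * pderiv 𝕜 none v := by
  cases k with
  | zero => simp
  | succ k => exact X_pow_succ_dvd_X_mul (X_pow_dvd_pderiv_self hv)

theorem Factor.X_pow_dvd_series_sub {v v' : MvPowerSeries (Option ι) 𝕜} {k : ℕ}
    (hv : X none ^ k ∣ v - v') (φ : Factor ι) : X none ^ k ∣ φ.series v - φ.series v' := by
  have hX := X_pow_dvd_X_mul_pderiv hv
  cases φ with
  | val => exact hv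
  | euler => rwa [series, series, ← mul_sub, ← map_sub]
  | eulerSq =>
    rw [series, series, ← mul_sub, sq_sub_sq, ← map_sub, mul_left_comm]
    exact hX.mul_left _
  | dx i =>
    rw [series, series, ← map_sub]
    exact X_pow_dvd_pderiv_of_ne (Option.some_ne_none i) hv
  | eulerDx i =>
    rw [series, series, ← mul_sub, ← map_sub, ← map_sub]
    cases k with
    | zero => simp
    | succ k =>
      exact X_pow_succ_dvd_X_mul
        (X_pow_dvd_pderiv_of_ne (Option.some_ne_none i) (X_pow_dvd_pderiv_self hv))
  | dxx i j =>
    rw [series, series, ← map_sub, ← map_sub]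
    exact X_pow_dvd_pderiv_of_ne (Option.some_ne_none i)
      (X_pow_dvd_pderiv_of_ne (Option.some_ne_none j) hv)

variable [Fintype κ]

/-- The right-hand side `∑ₖ cₖ ∏_{φ ∈ eₖ} φ(v)` of a Fuchsian equation for a formal power series;
`eₖ` lists the factors of the `k`-th monomial. -/
noncomputable def rhsSeries (e : κ → List (Factor ι)) (c : κ → MvPowerSeries (Option ι) 𝕜)
    (v : MvPowerSeries (Option ι) 𝕜) : MvPowerSeries (Option ι) 𝕜 :=
  ∑ k, c k * ((e k).map fun φ => φ.series v).prod

theorem dvd_list_prod_map_sub {α A : Type*} [CommRing A] {a : A} {f g : α → A}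
    (h : ∀ x, a ∣ f x - g x) (L : List α) : a ∣ (L.map f).prod - (L.map g).prod := by
  induction L with
  | nil => simp
  | cons x L ih => simpa using dvd_mul_sub_mul (h x) ih

theorem X_pow_dvd_rhsSeries_sub (e : κ → List (Factor ι))
    (c : κ → MvPowerSeries (Option ι) 𝕜) {v v' : MvPowerSeries (Option ι) 𝕜} {k : ℕ}
    (hv : X none ^ k ∣ v - v') : X none ^ k ∣ rhsSeries e c v - rhsSeries e c v' := by
  rw [rhsSeries, rhsSeries, ← Finset.sum_sub_distrib]
  refine Finset.dvd_sum fun l _ => ?_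
  rw [← mul_sub]
  exact (dvd_list_prod_map_sub (Factor.X_pow_dvd_series_sub hv) (e l)).mul_left _

theorem isAdicContraction_rhsSeries_add_fuchsInv (e : κ → List (Factor ι))
    (c : κ → MvPowerSeries (Option ι) 𝕜) (g : MvPowerSeries (Option ι) 𝕜) :
    IsAdicContraction none fun F => rhsSeries e c (g + fuchsInv F) := by
  intro k F G h
  refine X_pow_dvd_rhsSeries_sub e c ?_
  rw [add_sub_add_left_eq_sub, ← map_sub]
  exact X_pow_succ_dvd_fuchsInv h

theorem eq_add_fuchsInv_fuchsOp {v g : MvPowerSeries (Option ι) 𝕜}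
    (hg : pderiv 𝕜 none g = 0) (hv : X none ∣ v - g) : v = g + fuchsInv (fuchsOp v) := by
  have h : fuchsOp v = fuchsOp (v - g) := by
    rw [← fuchsOp_add_of_pderiv_eq_zero (v - g) hg, add_sub_cancel]
  rw [h, fuchsInv_fuchsOp hv, add_sub_cancel]

theorem eq_of_fuchsOp_eq_rhsSeries (e : κ → List (Factor ι))
    (c : κ → MvPowerSeries (Option ι) 𝕜) {g v v' : MvPowerSeries (Option ι) 𝕜}
    (hg : pderiv 𝕜 none g = 0) (hv : fuchsOp v = rhsSeries e c v) (hvg : X none ∣ v - g)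
    (hv' : fuchsOp v' = rhsSeries e c v') (hvg' : X none ∣ v' - g) : v = v' := by
  have hF : fuchsOp v = fuchsOp v' :=
    (isAdicContraction_rhsSeries_add_fuchsInv e c g).eq_of_isFixedPt
      (by rw [← eq_add_fuchsInv_fuchsOp hg hvg, hv])
      (by rw [← eq_add_fuchsInv_fuchsOp hg hvg', hv'])
  rw [eq_add_fuchsInv_fuchsOp hg hvg, hF, ← eq_add_fuchsInv_fuchsOp hg hvg']

section Norm

theorem weightedNorm_mul_list_prod_le {σ α A : Type*} [NormedCommRing A] {w : (σ →₀ ℕ) → ℝ≥0}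
    (hw : ∀ a b, w (a + b) ≤ w a * w b) {f : α → MvPowerSeries σ A} {B : ℝ≥0∞}
    (hf : ∀ x, weightedNorm w (f x) ≤ B) (G : MvPowerSeries σ A) (L : List α) :
    weightedNorm w (G * (L.map f).prod) ≤ weightedNorm w G * B ^ L.length := by
  induction L generalizing G with
  | nil => simp
  | cons x L ih =>
    calc weightedNorm w (G * ((x :: L).map f).prod)
        = weightedNorm w (G * f x * (L.map f).prod) := by
          rw [List.map_cons, List.prod_cons, mul_assoc]
      _ ≤ weightedNorm w (G * f x) * B ^ L.length := ih _
      _ ≤ weightedNorm w G * B * B ^ L.length := by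
          gcongr
          exact (weightedNorm_mul_le hw G (f x)).trans (mul_le_mul_right (hf x) _)
      _ = weightedNorm w G * B ^ (x :: L).length := by
          rw [List.length_cons, pow_succ', mul_assoc]

theorem weightedNorm_rhsSeries_le {w : (Option ι →₀ ℕ) → ℝ≥0}
    (hw : ∀ a b, w (a + b) ≤ w a * w b) (e : κ → List (Factor ι))
    {c : κ → MvPowerSeries (Option ι) 𝕜} {M B : ℝ≥0∞}
    (hc : ∀ k, weightedNorm w (c k) ≤ M) {v : MvPowerSeries (Option ι) 𝕜}
    (hv : ∀ φ : Factor ι, weightedNorm w (φ.series v) ≤ B) :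
    weightedNorm w (rhsSeries e c v) ≤ ∑ k, M * B ^ (e k).length := by
  refine (weightedNorm_sum_le w _ _).trans (Finset.sum_le_sum fun k _ => ?_)
  exact (weightedNorm_mul_list_prod_le hw hv _ _).trans (mul_le_mul_left (hc k) _)

theorem Factor.series_add {g : MvPowerSeries (Option ι) 𝕜} (hg : pderiv 𝕜 none g = 0)
    (v : MvPowerSeries (Option ι) 𝕜) (φ : Factor ι) :
    φ.series (g + v) = φ.series g + φ.series v := by
  cases φ <;> simp [series, hg]

theorem Factor.weightedNorm_series_fuchsInv_le {δ R η K : ℝ≥0} (hR : 0 < R) (hδ : δ ≤ η)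
    (hδ₁ : 2 * δ / R ≤ η) (hδ₂ : 4 * δ / R ^ 2 ≤ η) {F : MvPowerSeries (Option ι) 𝕜}
    (hF : weightedNorm (monomialWeight δ R) F ≤ K) (φ : Factor ι) :
    weightedNorm (monomialWeight δ R) (φ.series (fuchsInv F)) ≤ (η * K + η * K * K : ℝ≥0) := by
  have hlinear {a : ℝ≥0} (ha : a ≤ η) :
      a * weightedNorm (monomialWeight δ R) F ≤ (η * K + η * K * K : ℝ≥0) :=
    calc (a * weightedNorm (monomialWeight δ R) F : ℝ≥0∞) ≤ η * K := by gcongr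
      _ ≤ (η * K + η * K * K : ℝ≥0) := by
        push_cast
        exact le_self_add
  cases φ with
  | val => exact (weightedNorm_fuchsInv_le F).trans (hlinear hδ)
  | euler => exact (weightedNorm_X_mul_pderiv_none_fuchsInv_le F).trans (hlinear hδ)
  | eulerSq =>
    rw [series, sq, ← mul_assoc]
    calc _ ≤ _ := weightedNorm_mul_le monomialWeight_add_le _ _
      _ ≤ (η * K * K : ℝ≥0∞) := by
        gcongr
        · exact (weightedNorm_X_mul_pderiv_none_fuchsInv_le F).trans (by gcongr)
        · exact (weightedNorm_pderiv_none_fuchsInv_le F).trans hF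
      _ ≤ (η * K + η * K * K : ℝ≥0) := by
        push_cast
        exact le_add_self
  | dx i => exact (weightedNorm_pderiv_some_fuchsInv_le F i hR).trans (hlinear hδ₁)
  | eulerDx i =>
    exact (weightedNorm_X_mul_pderiv_some_pderiv_none_fuchsInv_le F i hR).trans (hlinear hδ₁)
  | dxx i j => exact (weightedNorm_pderiv_some_pderiv_some_fuchsInv_le F i j hR).trans (hlinear hδ₂)

theorem exists_sum_mul_pow_le (M : ℝ≥0) (d : κ → ℕ) :
    ∃ K η : ℝ≥0, 0 < η ∧ ∑ k, M * (M + (η * K + η * K * K)) ^ d k ≤ K := by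
  set f : ℝ≥0 → ℝ≥0 → ℝ≥0 := fun K η => ∑ k, M * (M + (η * K + η * K * K)) ^ d k with hf
  have h0 (K : ℝ≥0) : f K 0 = f 0 0 := by simp [hf]
  have hcont : Continuous (f (f 0 0 + 1)) := by fun_prop
  have hlt : ∀ᶠ η in 𝓝[>] 0, f (f 0 0 + 1) η < f 0 0 + 1 :=
    (hcont.continuousAt.eventually_lt continuousAt_const
      ((h0 _).trans_lt (lt_add_one _))).filter_mono nhdsWithin_le_nhds
  obtain ⟨η, hη, hpos⟩ := (hlt.and self_mem_nhdsWithin).exists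
  exact ⟨f 0 0 + 1, η, hpos, hη.le⟩

theorem exists_pos_le_of_pos {r η : ℝ≥0} (hr : 0 < r) (hη : 0 < η) :
    ∃ δ : ℝ≥0, 0 < δ ∧ δ ≤ r ∧ δ ≤ η ∧ 2 * δ / r ≤ η ∧ 4 * δ / r ^ 2 ≤ η := by
  have hsmall {f : ℝ≥0 → ℝ≥0} (hf : Continuous f) (h0 : f 0 = 0) {b : ℝ≥0} (hb : 0 < b) :
      ∀ᶠ δ in 𝓝[>] 0, f δ ≤ b :=
    ((hf.tendsto' 0 0 h0).eventually_le_const hb).filter_mono nhdsWithin_le_nhds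
  have h : ∀ᶠ δ : ℝ≥0 in 𝓝[>] 0, 0 < δ := self_mem_nhdsWithin
  exact (((h.and (hsmall continuous_id rfl hr)).and (hsmall continuous_id rfl hη)).and
    ((hsmall (f := fun δ => 2 * δ / r) (by fun_prop) (by simp) hη).and
      (hsmall (f := fun δ => 4 * δ / r ^ 2) (by fun_prop) (by simp) hη))).exists.imp
    fun δ ⟨⟨⟨h₁, h₂⟩, h₃⟩, h₄, h₅⟩ => ⟨h₁, h₂, h₃, h₄, h₅⟩

end Norm

theorem IsConvergent.series {v : MvPowerSeries (Option ι) 𝕜} (hv : IsConvergent v)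
    (φ : Factor ι) : IsConvergent (φ.series v) := by
  have hX : IsConvergent (X none : MvPowerSeries (Option ι) 𝕜) := isConvergent_X none
  cases φ with
  | val => exact hv
  | euler => exact hX.mul (hv.pderiv none)
  | eulerSq =>
    rw [Factor.series, sq]
    exact hX.mul ((hv.pderiv none).mul (hv.pderiv none))
  | dx i => exact hv.pderiv (some i)
  | eulerDx i => exact hX.mul ((hv.pderiv none).pderiv (some i))
  | dxx i j => exact (hv.pderiv (some j)).pderiv (some i)

theorem exists_fuchsOp_eq_rhsSeries [Finite ι] (e : κ → List (Factor ι))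
    {c : κ → MvPowerSeries (Option ι) 𝕜} (hc : ∀ k, IsConvergent (c k))
    {g : MvPowerSeries (Option ι) 𝕜} (hg : pderiv 𝕜 none g = 0) (hgc : IsConvergent g) :
    ∃ v, IsConvergent v ∧ fuchsOp v = rhsSeries e c v ∧ X none ∣ v - g := by
  obtain ⟨r, M, hr, hM⟩ := exists_forall_weightedNorm_le
    (F := Sum.elim c fun φ : Factor ι => φ.series g) (Sum.rec hc hgc.series)
  obtain ⟨K, η, hη, hK⟩ := exists_sum_mul_pow_le M fun k => (e k).length
  obtain ⟨δ, hδ0, hδr, hδ, hδ₁, hδ₂⟩ := exists_pos_le_of_pos hr hη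
  have hw (F : MvPowerSeries (Option ι) 𝕜) :
      weightedNorm (monomialWeight δ r) F ≤ weightedNorm (degreeWeight r) F :=
    weightedNorm_mono (monomialWeight_le_degreeWeight hδr le_rfl) F
  have hseries {F} (hF : weightedNorm (monomialWeight δ r) F ≤ K) (φ : Factor ι) :
      weightedNorm (monomialWeight δ r) (φ.series (g + fuchsInv F)) ≤
        (M + (η * K + η * K * K) : ℝ≥0) := by
    rw [Factor.series_add hg, ENNReal.coe_add]
    exact (weightedNorm_add_le _ _ _).trans (add_le_add ((hw _).trans (hM (.inr φ)))
      (Factor.weightedNorm_series_fuchsInv_le hr hδ hδ₁ hδ₂ hF φ))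
  obtain ⟨F, hF, hFK⟩ :=
    (isAdicContraction_rhsSeries_add_fuchsInv e c g).exists_isFixedPt_weightedNorm_le fun F hF =>
      (weightedNorm_rhsSeries_le monomialWeight_add_le e (fun k => (hw _).trans (hM (.inl k)))
        (hseries hF)).trans (by exact_mod_cast hK)
  refine ⟨g + fuchsInv F, ⟨min (δ / 4) (r / 2), by positivity, ?_⟩, ?_, ?_⟩
  · have hle : degreeWeight (min (δ / 4) (r / 2)) ≤ monomialWeight (ι := ι) δ r :=
      degreeWeight_le_monomialWeight
        ((mul_le_mul_right (min_le_left _ _) _).trans_eq (mul_div_cancel₀ _ four_ne_zero))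
        ((mul_le_mul_right (min_le_right _ _) _).trans_eq (mul_div_cancel₀ _ two_ne_zero))
    exact ne_top_of_le_ne_top ENNReal.coe_ne_top
      ((weightedNorm_mono hle _).trans (hseries hFK .val))
  · rw [fuchsOp_add_of_pderiv_eq_zero _ hg, fuchsOp_fuchsInv]
    exact hF.symm
  · rw [add_sub_cancel_left]
    exact X_dvd_fuchsInv F

end FormalSolution

/-! ### Functions with a convergent power series expansion -/

section HasExpansion

variable {σ 𝕜 : Type*} [RCLike 𝕜]

/-- The value of the monomial with exponent `m` at a point. -/
noncomputable def monomialEval (m : σ →₀ ℕ) (y : σ → 𝕜) : 𝕜 :=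
  m.prod fun i k => y i ^ k

theorem monomialEval_add (a b : σ →₀ ℕ) (y : σ → 𝕜) :
    monomialEval (a + b) y = monomialEval a y * monomialEval b y := by
  classical
  exact prod_add_index' (fun _ => pow_zero _) fun _ _ _ => pow_add _ _ _

theorem monomialEval_single (i : σ) (k : ℕ) (y : σ → 𝕜) : monomialEval (single i k) y = y i ^ k :=
  prod_single_index (pow_zero _)

theorem monomialEval_zero_of_ne_zero {m : σ →₀ ℕ} (hm : m ≠ 0) :
    monomialEval m (0 : σ → 𝕜) = 0 := by
  obtain ⟨i, hi⟩ := Finsupp.ne_iff.1 hm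
  exact Finset.prod_eq_zero (mem_support_iff.2 hi) (zero_pow hi)

theorem monomialEval_congr {m : σ →₀ ℕ} {y z : σ → 𝕜} (h : ∀ i, m i ≠ 0 → y i = z i) :
    monomialEval m y = monomialEval m z :=
  Finsupp.prod_congr fun i hi => by rw [h i (mem_support_iff.1 hi)]

theorem norm_monomialEval_le {r : ℝ≥0} {y : σ → 𝕜} (hy : ∀ i, ‖y i‖ ≤ r) (m : σ →₀ ℕ) :
    ‖monomialEval m y‖ ≤ degreeWeight r m := by
  rw [monomialEval, Finsupp.prod, norm_prod, degreeWeight, degree_apply, NNReal.coe_pow,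
    ← Finset.prod_pow_eq_pow_sum]
  refine Finset.prod_le_prod (fun i _ => norm_nonneg _) fun i _ => ?_
  rw [norm_pow]
  gcongr
  exact hy i

theorem hasDerivAt_monomialEval_update [DecidableEq σ] (m : σ →₀ ℕ) (i : σ) (y : σ → 𝕜) (s : 𝕜) :
    HasDerivAt (fun s => monomialEval m (Function.update y i s))
      (m i * monomialEval (m - single i 1) (Function.update y i s)) s := by
  have hmon (k : ℕ) (s : 𝕜) : monomialEval (m.erase i + single i k) (Function.update y i s) =
      monomialEval (m.erase i) y * s ^ k := by
    rw [monomialEval_add, monomialEval_single, Function.update_self]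
    congr 1
    exact monomialEval_congr fun j hj =>
      Function.update_of_ne (fun h => hj (by rw [h, erase_same])) _ _
  have hsub : m - single i 1 = m.erase i + single i (m i - 1) := by
    ext j
    by_cases hj : j = i
    · simp [hj]
    · simp [erase_ne hj, single_eq_of_ne hj]
  rw [hsub, hmon, mul_left_comm]
  conv in fun _ => _ => rw [← erase_add_single i m]
  simp only [hmon]
  exact (hasDerivAt_pow (m i) s).const_mul _

theorem summable_norm_coeff_mul_weight {w : (σ →₀ ℕ) → ℝ≥0} {F : MvPowerSeries σ 𝕜}
    (hF : weightedNorm w F ≠ ⊤) : Summable fun m => ‖coeff m F‖ * (w m : ℝ) := by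
  have h : ∑' m, ((‖coeff m F‖₊ * w m : ℝ≥0) : ℝ≥0∞) ≠ ⊤ := by
    simpa only [ENNReal.coe_mul, ← enorm_eq_nnnorm, weightedNorm] using hF
  exact NNReal.summable_coe.2 (ENNReal.tsum_coe_ne_top_iff_summable.1 h)

theorem summable_norm_coeff_mul_monomialEval [Fintype σ] {r : ℝ≥0} {F : MvPowerSeries σ 𝕜}
    (hF : weightedNorm (degreeWeight r) F ≠ ⊤) {y : σ → 𝕜} (hy : ‖y‖ ≤ r) :
    Summable fun m => ‖coeff m F * monomialEval m y‖ := by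
  refine (summable_norm_coeff_mul_weight hF).of_nonneg_of_le (fun m => norm_nonneg _) fun m => ?_
  rw [norm_mul]
  gcongr
  exact norm_monomialEval_le (fun i => (norm_le_pi_norm y i).trans hy) m

theorem IsConvergent.eventually_summable [Finite σ] {F : MvPowerSeries σ 𝕜} (hF : IsConvergent F) :
    ∀ᶠ y : σ → 𝕜 in 𝓝 0, Summable fun m => ‖coeff m F * monomialEval m y‖ := by
  have := Fintype.ofFinite σ
  obtain ⟨r, hr, hF⟩ := hF
  filter_upwards [Metric.closedBall_mem_nhds 0 (NNReal.coe_pos.2 hr)] with y hy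
  exact summable_norm_coeff_mul_monomialEval hF (mem_closedBall_zero_iff.1 hy)

theorem tsum_mul_tsum_of_summable_norm {M A : Type*} [AddCommMonoid M]
    [Finset.HasAntidiagonal M] [NormedRing A] [CompleteSpace A] {f g : M → A}
    (hf : Summable fun m => ‖f m‖) (hg : Summable fun m => ‖g m‖) :
    (∑' m, f m) * ∑' m, g m = ∑' m, ∑ p ∈ antidiagonal m, f p.1 * g p.2 :=
  hf.of_norm.tsum_mul_tsum_eq_tsum_sum_antidiagonal hg.of_norm (summable_mul_of_summable_norm hf hg)

/-- Near the origin, `f` is the sum of the convergent power series `F`. -/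
def HasExpansion (f : (σ → 𝕜) → 𝕜) (F : MvPowerSeries σ 𝕜) : Prop :=
  IsConvergent F ∧ ∀ᶠ y in 𝓝 0, HasSum (fun m => coeff m F * monomialEval m y) (f y)

theorem IsConvergent.hasExpansion [Finite σ] {F : MvPowerSeries σ 𝕜} (hF : IsConvergent F) :
    HasExpansion (fun y => ∑' m, coeff m F * monomialEval m y) F :=
  ⟨hF, hF.eventually_summable.mono fun _ hy => hy.of_norm.hasSum⟩

theorem hasExpansion_monomial (k : σ →₀ ℕ) (a : 𝕜) :
    HasExpansion (fun y => a * monomialEval k y) (monomial k a) := by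
  classical
  refine ⟨isConvergent_monomial k a, .of_forall fun y => ?_⟩
  have h := hasSum_single k (f := fun m => coeff m (monomial k a) * monomialEval m y)
    fun m hm => by rw [coeff_monomial_ne hm, zero_mul]
  rwa [coeff_monomial_same] at h

theorem hasExpansion_C (a : 𝕜) : HasExpansion (fun _ : σ → 𝕜 => a) (C a) := by
  simpa [monomialEval] using hasExpansion_monomial (0 : σ →₀ ℕ) a

theorem hasExpansion_X (i : σ) : HasExpansion (fun y : σ → 𝕜 => y i) (X i) := by
  have h := hasExpansion_monomial (single i 1) (1 : 𝕜)
  simp only [monomialEval_single, pow_one, one_mul] at h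
  exact h

namespace HasExpansion

variable {f g : (σ → 𝕜) → 𝕜} {F G : MvPowerSeries σ 𝕜}

theorem congr (hf : HasExpansion f F) (h : f =ᶠ[𝓝 0] g) : HasExpansion g F := by
  refine ⟨hf.1, ?_⟩
  filter_upwards [hf.2, h] with y hy hfg
  rwa [← hfg]

theorem eventuallyEq (hf : HasExpansion f F) (hg : HasExpansion g F) : f =ᶠ[𝓝 0] g := by
  filter_upwards [hf.2, hg.2] with y hfy hgy
  exact hfy.unique hgy

theorem apply_zero (hf : HasExpansion f F) : f 0 = constantCoeff F := by
  refine hf.2.self_of_nhds.unique ?_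
  simpa [monomialEval] using hasSum_single (0 : σ →₀ ℕ)
    (f := fun m => coeff m F * monomialEval m (0 : σ → 𝕜))
    fun m hm => by rw [monomialEval_zero_of_ne_zero hm, mul_zero]

theorem add (hf : HasExpansion f F) (hg : HasExpansion g G) :
    HasExpansion (fun y => f y + g y) (F + G) := by
  refine ⟨hf.1.add hg.1, ?_⟩
  filter_upwards [hf.2, hg.2] with y hfy hgy
  simpa only [map_add, add_mul] using hfy.add hgy

theorem sum {κ : Type*} (s : Finset κ) {f : κ → (σ → 𝕜) → 𝕜} {F : κ → MvPowerSeries σ 𝕜}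
    (h : ∀ k, HasExpansion (f k) (F k)) :
    HasExpansion (fun y => ∑ k ∈ s, f k y) (∑ k ∈ s, F k) := by
  classical
  induction s using Finset.induction_on with
  | empty => simpa using hasExpansion_C (σ := σ) (0 : 𝕜)
  | insert k s hk ih => simpa only [Finset.sum_insert hk] using (h k).add ih

theorem mul [Finite σ] (hf : HasExpansion f F) (hg : HasExpansion g G) :
    HasExpansion (fun y => f y * g y) (F * G) := by
  classical
  refine ⟨hf.1.mul hg.1, ?_⟩
  filter_upwards [hf.2, hg.2, hf.1.eventually_summable, hg.1.eventually_summable,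
    (hf.1.mul hg.1).eventually_summable] with y hfy hgy hF hG hFG
  have hcoeff (m : σ →₀ ℕ) : coeff m (F * G) * monomialEval m y = ∑ p ∈ antidiagonal m,
      coeff p.1 F * monomialEval p.1 y * (coeff p.2 G * monomialEval p.2 y) := by
    rw [coeff_mul, Finset.sum_mul]
    refine Finset.sum_congr rfl fun p hp => ?_
    rw [← mem_antidiagonal.1 hp, monomialEval_add, mul_mul_mul_comm]
  have hprod := tsum_mul_tsum_of_summable_norm hF hG
  rw [hfy.tsum_eq, hgy.tsum_eq, ← tsum_congr hcoeff] at hprod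
  rw [hprod]
  exact hFG.of_norm.hasSum

theorem list_prod [Finite σ] {α : Type*} {f : α → (σ → 𝕜) → 𝕜} {F : α → MvPowerSeries σ 𝕜}
    (h : ∀ a, HasExpansion (f a) (F a)) (L : List α) :
    HasExpansion (fun y => (L.map fun a => f a y).prod) (L.map F).prod := by
  induction L with
  | nil => simpa using hasExpansion_C (σ := σ) (1 : 𝕜)
  | cons a L ih => simpa only [List.map_cons, List.prod_cons] using (h a).mul ih

end HasExpansion

end HasExpansion

/-! ### Derivatives and uniqueness of expansions -/

section PartialDeriv

variable {σ 𝕜 : Type*} [RCLike 𝕜]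

theorem hasSum_add_single_iff {M : Type*} [AddCommMonoid M] [TopologicalSpace M] {i : σ}
    {u : (σ →₀ ℕ) → M} (hu : ∀ m, m i = 0 → u m = 0) {a : M} :
    HasSum (fun m => u (m + single i 1)) a ↔ HasSum u a :=
  (add_left_injective (single i 1)).hasSum_iff fun m hm => hu m <| by
    contrapose! hm
    exact ⟨m - single i 1, sub_add_single_one_cancel hm⟩

theorem hasSum_coeff_pderiv_mul_iff {F : MvPowerSeries σ 𝕜} {i : σ} {u : (σ →₀ ℕ) → 𝕜} {a : 𝕜} :
    HasSum (fun m => coeff m (pderiv 𝕜 i F) * u m) a ↔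
      HasSum (fun m => coeff m F * (m i * u (m - single i 1))) a := by
  rw [← hasSum_add_single_iff (u := fun m => coeff m F * (m i * u (m - single i 1))) fun m hm => by
    rw [hm, Nat.cast_zero, zero_mul, mul_zero]]
  refine iff_of_eq (congrArg (HasSum · a) (funext fun m => ?_))
  rw [coeff_pderiv, add_tsub_cancel_right, mul_assoc, Finsupp.add_apply, single_eq_same,
    Nat.cast_succ]

variable [DecidableEq σ]

/-- The partial derivative of `f` in the coordinate `i`. -/
noncomputable def partialDeriv (i : σ) (f : (σ → 𝕜) → 𝕜) (y : σ → 𝕜) : 𝕜 :=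
  deriv (fun s => f (Function.update y i s)) (y i)

theorem continuous_update_self (i : σ) (y : σ → 𝕜) :
    Continuous fun s => Function.update y i s :=
  continuous_const.update i continuous_id

theorem partialDeriv_congr (i : σ) {f g : (σ → 𝕜) → 𝕜} {y : σ → 𝕜} (h : f =ᶠ[𝓝 y] g) :
    partialDeriv i f =ᶠ[𝓝 y] partialDeriv i g := by
  filter_upwards [h.eventuallyEq_nhds] with z hz
  refine Filter.EventuallyEq.deriv_eq (Filter.Tendsto.eventually ?_ hz)
  simpa only [Function.update_eq_self] using (continuous_update_self i z).tendsto (z i)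

theorem hasDerivAt_tsum_monomialEval_update [Fintype σ] {r : ℝ≥0} {i : σ} {F : MvPowerSeries σ 𝕜}
    (hF : weightedNorm (degreeWeight r) F ≠ ⊤)
    (hF' : weightedNorm (degreeWeight r) (pderiv 𝕜 i F) ≠ ⊤) {y : σ → 𝕜} (hy : ‖y‖ < r) :
    HasDerivAt (fun s => ∑' m, coeff m F * monomialEval m (Function.update y i s))
      (∑' m, coeff m (pderiv 𝕜 i F) * monomialEval m y) (y i) := by
  have hr : (0 : ℝ) < r := (norm_nonneg y).trans_lt hy
  have hball {s : 𝕜} (hs : s ∈ Metric.ball 0 (r : ℝ)) : ‖Function.update y i s‖ ≤ r := by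
    refine (pi_norm_le_iff_of_nonneg hr.le).2 fun j => ?_
    rcases eq_or_ne j i with rfl | hj
    · simpa only [Function.update_self] using (mem_ball_zero_iff.1 hs).le
    · simpa only [Function.update_of_ne hj] using (norm_le_pi_norm y j).trans hy.le
  have hyi : y i ∈ Metric.ball 0 (r : ℝ) := mem_ball_zero_iff.2 ((norm_le_pi_norm y i).trans_lt hy)
  have hbound : Summable fun m : σ →₀ ℕ =>
      ‖coeff m F * (m i * ((degreeWeight r (m - single i 1) : ℝ) : 𝕜))‖ := by
    obtain ⟨a, ha⟩ : Summable fun m => coeff m (pderiv 𝕜 i F) * ((degreeWeight r m : ℝ) : 𝕜) := by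
      refine .of_norm ((summable_norm_coeff_mul_weight hF').congr fun m => ?_)
      rw [norm_mul, RCLike.norm_ofReal, NNReal.abs_eq]
    exact (hasSum_coeff_pderiv_mul_iff.1 ha).summable.norm
  have hderiv := hasDerivAt_tsum_of_isPreconnected hbound Metric.isOpen_ball
    (convex_ball (0 : 𝕜) r).isPreconnected
    (fun m s _ => (hasDerivAt_monomialEval_update m i y s).const_mul (coeff m F))
    (fun m s hs => ?_) hyi (summable_norm_coeff_mul_monomialEval hF (hball hyi)).of_norm hyi
  · have hsum := (summable_norm_coeff_mul_monomialEval hF' hy.le).of_norm.hasSum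
    rwa [Function.update_eq_self, (hasSum_coeff_pderiv_mul_iff.1 hsum).tsum_eq] at hderiv
  · rw [norm_mul, norm_mul, norm_mul, norm_mul, RCLike.norm_ofReal, NNReal.abs_eq]
    gcongr
    exact norm_monomialEval_le (fun j => (norm_le_pi_norm _ j).trans (hball hs)) _

theorem HasExpansion.partialDeriv [Finite σ] {f : (σ → 𝕜) → 𝕜} {F : MvPowerSeries σ 𝕜}
    (hf : HasExpansion f F) (i : σ) : HasExpansion (partialDeriv i f) (pderiv 𝕜 i F) := by
  have := Fintype.ofFinite σ
  have hF := hf.1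
  refine (hF.pderiv i).hasExpansion.congr ?_
  obtain ⟨r, ⟨hr, hr'⟩, hr0⟩ := (((isConvergent_iff_eventually.1 hF).and
    (isConvergent_iff_eventually.1 (hF.pderiv i))).and self_mem_nhdsWithin).exists
  refine Filter.EventuallyEq.trans ?_
    (partialDeriv_congr i (hF.hasExpansion.eventuallyEq hf))
  filter_upwards [Metric.ball_mem_nhds 0 (NNReal.coe_pos.2 hr0)] with y hy
  exact (hasDerivAt_tsum_monomialEval_update hr hr' (mem_ball_zero_iff.1 hy)).deriv.symm

end PartialDeriv

section Uniqueness

variable {σ 𝕜 : Type*} [Finite σ] [RCLike 𝕜] {f : (σ → 𝕜) → 𝕜} {F G : MvPowerSeries σ 𝕜}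

theorem HasExpansion.coeff_eq (m : σ →₀ ℕ) (hf : HasExpansion f F) (hf' : HasExpansion f G) :
    coeff m F = coeff m G := by
  classical
  induction hk : m.degree generalizing m f F G with
  | zero =>
    rw [(degree_eq_zero_iff m).1 hk, coeff_zero_eq_constantCoeff_apply, ← hf.apply_zero,
      hf'.apply_zero, coeff_zero_eq_constantCoeff_apply]
  | succ k ih =>
    have hm : m ≠ 0 := by
      rintro rfl
      exact absurd hk (by simp)
    obtain ⟨i, hi⟩ := Finsupp.ne_iff.1 hm
    obtain ⟨m, rfl⟩ := exists_eq_add_single_of_ne_zero hi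
    rw [map_add, degree_single, Nat.add_right_cancel_iff] at hk
    have h := ih m (hf.partialDeriv i) (hf'.partialDeriv i) hk
    rw [coeff_pderiv, coeff_pderiv] at h
    exact mul_right_cancel₀ (Nat.cast_add_one_ne_zero (m i)) h

theorem HasExpansion.unique (hf : HasExpansion f F) (hg : HasExpansion f G) : F = G :=
  MvPowerSeries.ext fun m => hf.coeff_eq m hg

end Uniqueness

section Restrict

variable {σ 𝕜 : Type*} [RCLike 𝕜] {F G : MvPowerSeries σ 𝕜} {s : σ}

/-- The power series obtained from `F` by setting the variable `s` to zero. -/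
noncomputable def restrict (s : σ) (F : MvPowerSeries σ 𝕜) : MvPowerSeries σ 𝕜 :=
  fun m => if m s = 0 then coeff m F else 0

theorem coeff_restrict (m : σ →₀ ℕ) :
    coeff m (restrict s F) = if m s = 0 then coeff m F else 0 := rfl

theorem restrict_eq_restrict_iff : restrict s F = restrict s G ↔ X s ∣ F - G := by
  simp only [MvPowerSeries.ext_iff, coeff_restrict, X_dvd_iff, map_sub, sub_eq_zero]
  exact forall_congr' fun m => by split_ifs with hm <;> simp [hm]

theorem IsConvergent.restrict (hF : IsConvergent F) (s : σ) : IsConvergent (restrict s F) := by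
  obtain ⟨r, hr, hF⟩ := hF
  refine ⟨r, hr, ne_top_of_le_ne_top hF (ENNReal.tsum_le_tsum fun m => ?_)⟩
  rw [coeff_restrict]
  split_ifs <;> simp

variable [DecidableEq σ] {f g : (σ → 𝕜) → 𝕜}

theorem monomialEval_update_zero (m : σ →₀ ℕ) (s : σ) (y : σ → 𝕜) :
    monomialEval m (Function.update y s 0) = if m s = 0 then monomialEval m y else 0 := by
  split_ifs with hm
  · refine monomialEval_congr fun i hi => Function.update_of_ne ?_ _ _
    rintro rfl
    exact hi hm
  · refine Finset.prod_eq_zero (mem_support_iff.2 hm) ?_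
    simp only [Function.update_self, zero_pow hm]

theorem HasExpansion.restrict (hf : HasExpansion f F) (s : σ) :
    HasExpansion (fun y => f (Function.update y s 0)) (restrict s F) := by
  refine ⟨hf.1.restrict s, ?_⟩
  have hcont : Filter.Tendsto (fun y : σ → 𝕜 => Function.update y s 0) (𝓝 0) (𝓝 0) := by
    have h : Continuous fun y : σ → 𝕜 => Function.update y s 0 :=
      continuous_id.update s continuous_const
    exact h.tendsto' 0 0 (Function.update_eq_self s (0 : σ → 𝕜))
  filter_upwards [hcont.eventually hf.2] with y hy
  refine hy.congr_fun fun m => ?_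
  rw [coeff_restrict, monomialEval_update_zero]
  split_ifs <;> simp

theorem HasExpansion.X_dvd_sub_iff [Finite σ] (hf : HasExpansion f F) (hg : HasExpansion g G) :
    X s ∣ F - G ↔ ∀ᶠ y in 𝓝 0, f (Function.update y s 0) = g (Function.update y s 0) := by
  rw [← restrict_eq_restrict_iff]
  exact ⟨fun h => (hf.restrict s).eventuallyEq (h ▸ hg.restrict s),
    fun h => ((hf.restrict s).congr h).unique (hg.restrict s)⟩

end Restrict

/-! ### Analytic functions and expansions -/

section Word

variable {σ 𝕜 : Type*} [RCLike 𝕜]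

/-- The exponent of the commutative monomial of a word: the number of occurrences of each letter.
A Taylor series in several variables is naturally indexed by words. -/
noncomputable def wordExponent (w : Σ N, Fin N → σ) : σ →₀ ℕ :=
  ∑ k, single (w.2 k) 1

theorem wordExponent_surjective : Function.Surjective (wordExponent (σ := σ)) := by
  intro m
  induction m using Finsupp.induction_linear with
  | zero => exact ⟨⟨0, Fin.elim0⟩, by simp [wordExponent]⟩
  | add f g hf hg =>
    obtain ⟨⟨N, w⟩, rfl⟩ := hf
    obtain ⟨⟨N', w'⟩, rfl⟩ := hg
    exact ⟨⟨N + N', Fin.append w w'⟩, by simp [wordExponent, Fin.sum_univ_add]⟩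
  | single i k => exact ⟨⟨k, fun _ => i⟩, by simp [wordExponent]⟩

theorem degree_wordExponent (w : Σ N, Fin N → σ) : (wordExponent w).degree = w.1 := by
  simp [wordExponent]

theorem monomialEval_sum {κ : Type*} (s : Finset κ) (m : κ → σ →₀ ℕ) (y : σ → 𝕜) :
    monomialEval (∑ k ∈ s, m k) y = ∏ k ∈ s, monomialEval (m k) y := by
  classical
  induction s using Finset.induction_on with
  | empty => simp [monomialEval]
  | insert k s hk ih => rw [Finset.sum_insert hk, Finset.prod_insert hk, monomialEval_add, ih]

theorem monomialEval_wordExponent (w : Σ N, Fin N → σ) (y : σ → 𝕜) :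
    monomialEval (wordExponent w) y = ∏ k, y (w.2 k) := by
  simp only [wordExponent, monomialEval_sum, monomialEval_single, pow_one]

/-- Near the origin, `f` is the absolutely convergent sum of the monomials of all words `w`,
weighted by `c w`. -/
def HasWordExpansion (f : (σ → 𝕜) → 𝕜) (c : (Σ N, Fin N → σ) → 𝕜) : Prop :=
  ∃ r : ℝ≥0, 0 < r ∧ (Summable fun w => ‖c w‖ * (r : ℝ) ^ w.1) ∧
    ∀ᶠ y in 𝓝 0, HasSum (fun w => c w * ∏ k, y (w.2 k)) (f y)

variable {f : (σ → 𝕜) → 𝕜}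

theorem HasExpansion.exists_hasWordExpansion {F : MvPowerSeries σ 𝕜} (hf : HasExpansion f F) :
    ∃ c, HasWordExpansion f c := by
  obtain ⟨⟨r, hr, hF⟩, hf⟩ := hf
  obtain ⟨s, hs⟩ := (wordExponent_surjective (σ := σ)).hasRightInverse
  set c := Function.extend s (fun m => coeff m F) 0
  have hcs (m : σ →₀ ℕ) : c (s m) = coeff m F := hs.injective.extend_apply _ _ m
  have hc0 {w : Σ N, Fin N → σ} (hw : w ∉ Set.range s) : c w = 0 :=
    Function.extend_apply' _ _ w hw
  refine ⟨c, r, hr, ?_, hf.mono fun y hy => ?_⟩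
  · refine (hs.injective.summable_iff fun w hw => by rw [hc0 hw, norm_zero, zero_mul]).1 ?_
    refine (summable_norm_coeff_mul_weight hF).congr fun m => ?_
    rw [Function.comp_apply, hcs, ← degree_wordExponent, hs m, degreeWeight, NNReal.coe_pow]
  · refine (hs.injective.hasSum_iff fun w hw => by rw [hc0 hw, zero_mul]).1 ?_
    refine hy.congr_fun fun m => ?_
    rw [Function.comp_apply, hcs, ← monomialEval_wordExponent, hs m]

/-- The power series obtained by collecting the words with the same exponent. -/
noncomputable def collectWords (c : (Σ N, Fin N → σ) → 𝕜) : MvPowerSeries σ 𝕜 :=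
  fun m => ∑' w : wordExponent ⁻¹' {m}, c w

theorem coeff_collectWords (c : (Σ N, Fin N → σ) → 𝕜) (m : σ →₀ ℕ) :
    coeff m (collectWords c) = ∑' w : wordExponent ⁻¹' {m}, c w := rfl

theorem weightedNorm_collectWords_le (r : ℝ≥0) (c : (Σ N, Fin N → σ) → 𝕜) :
    weightedNorm (degreeWeight r) (collectWords c) ≤ ∑' w, ‖c w‖ₑ * (r : ℝ≥0∞) ^ w.1 := by
  rw [← ENNReal.tsum_fiberwise _ wordExponent]
  refine ENNReal.tsum_le_tsum fun m => ?_
  calc ‖coeff m (collectWords c)‖ₑ * degreeWeight r m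
      ≤ (∑' w : wordExponent ⁻¹' {m}, ‖c w‖ₑ) * degreeWeight r m := by
        gcongr
        exact enorm_tsum_le_tsum_enorm
    _ = ∑' w : wordExponent ⁻¹' {m}, ‖c w‖ₑ * (r : ℝ≥0∞) ^ w.1.1 := by
        rw [← ENNReal.tsum_mul_right]
        refine tsum_congr fun w => ?_
        rw [degreeWeight, ENNReal.coe_pow, ← degree_wordExponent,
          show wordExponent w.1 = m from w.2]

theorem HasWordExpansion.hasExpansion {c : (Σ N, Fin N → σ) → 𝕜} (hf : HasWordExpansion f c) :
    HasExpansion f (collectWords c) := by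
  obtain ⟨r, hr, hc, hf⟩ := hf
  refine ⟨⟨r, hr, ne_top_of_le_ne_top ?_ (weightedNorm_collectWords_le r c)⟩,
    hf.mono fun y hy => ?_⟩
  · have hsum : Summable fun w : Σ N, Fin N → σ => ‖c w‖₊ * r ^ w.1 := by
      rw [← NNReal.summable_coe]
      simpa only [NNReal.coe_mul, NNReal.coe_pow, coe_nnnorm] using hc
    simpa only [ENNReal.coe_mul, ENNReal.coe_pow, ← enorm_eq_nnnorm] using
      ENNReal.tsum_coe_ne_top_iff_summable.2 hsum
  · simp only [← monomialEval_wordExponent] at hy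
    refine (hy.tsum_fiberwise wordExponent).congr_fun fun m => ?_
    rw [coeff_collectWords, ← tsum_mul_right]
    exact tsum_congr fun w => by rw [show wordExponent w.1 = m from w.2]

/-- The monomial of a word as a multilinear map. -/
noncomputable def wordMultilinear {N : ℕ} (w : Fin N → σ) :
    ContinuousMultilinearMap 𝕜 (fun _ : Fin N => σ → 𝕜) 𝕜 :=
  (ContinuousMultilinearMap.mkPiAlgebra 𝕜 (Fin N) 𝕜).compContinuousLinearMap
    fun k => ContinuousLinearMap.proj (w k)

theorem wordMultilinear_apply {N : ℕ} (w : Fin N → σ) (x : Fin N → σ → 𝕜) :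
    wordMultilinear w x = ∏ k, x k (w k) := rfl

variable [Fintype σ]

theorem apply_diag_eq_sum {N : ℕ}
    (q : ContinuousMultilinearMap 𝕜 (fun _ : Fin N => σ → 𝕜) 𝕜) [DecidableEq σ] (y : σ → 𝕜) :
    (q fun _ => y) = ∑ w : Fin N → σ, (q fun k => Pi.single (w k) 1) * ∏ k, y (w k) := by
  have hy : y = ∑ i, y i • (Pi.single i 1 : σ → 𝕜) := by
    simp only [← Pi.single_smul', smul_eq_mul, mul_one, Finset.univ_sum_single]
  conv_lhs => rw [hy]
  rw [q.map_sum]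
  refine Finset.sum_congr rfl fun w _ => ?_
  rw [q.map_smul_univ, smul_eq_mul, mul_comm]

theorem norm_apply_single_le {N : ℕ} [DecidableEq σ]
    (q : ContinuousMultilinearMap 𝕜 (fun _ : Fin N => σ → 𝕜) 𝕜) (w : Fin N → σ) :
    ‖q fun k => Pi.single (w k) 1‖ ≤ ‖q‖ :=
  q.unit_le_opNorm ((pi_norm_le_iff_of_nonneg zero_le_one).2 fun k => by simp [Pi.norm_single])

theorem summable_norm_apply_single_mul_pow [DecidableEq σ]
    (p : FormalMultilinearSeries 𝕜 (σ → 𝕜) 𝕜) {r : ℝ≥0}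
    (hr : Summable fun N => ‖p N‖ * (Fintype.card σ * r : ℝ) ^ N) :
    Summable fun w : Σ N, Fin N → σ => ‖p w.1 fun k => Pi.single (w.2 k) 1‖ * (r : ℝ) ^ w.1 := by
  rw [summable_sigma_of_nonneg fun w => by positivity]
  refine ⟨fun N => (hasSum_fintype _).summable, ?_⟩
  refine hr.of_nonneg_of_le (fun N => tsum_nonneg fun w => by positivity) fun N => ?_
  calc ∑' w : Fin N → σ, ‖p N fun k => Pi.single (w k) 1‖ * (r : ℝ) ^ N
      ≤ ∑ _w : Fin N → σ, ‖p N‖ * (r : ℝ) ^ N := by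
        rw [tsum_fintype]
        gcongr
        exact norm_apply_single_le _ _
    _ = ‖p N‖ * (Fintype.card σ * r : ℝ) ^ N := by
        rw [Finset.sum_const, Finset.card_univ, Fintype.card_fun, Fintype.card_fin, nsmul_eq_mul,
          Nat.cast_pow, mul_pow, mul_left_comm]

theorem summable_mul_prod_of_norm_le {c : (Σ N, Fin N → σ) → 𝕜} {r : ℝ≥0}
    (hc : Summable fun w => ‖c w‖ * (r : ℝ) ^ w.1) {y : σ → 𝕜} (hy : ‖y‖ ≤ r) :
    Summable fun w => c w * ∏ k, y (w.2 k) := by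
  refine .of_norm (hc.of_nonneg_of_le (fun _ => norm_nonneg _) fun w => ?_)
  rw [norm_mul, norm_prod]
  gcongr
  calc ∏ k, ‖y (w.2 k)‖ ≤ ∏ _k : Fin w.1, (r : ℝ) :=
        Finset.prod_le_prod (fun _ _ => norm_nonneg _) fun k _ => (norm_le_pi_norm y _).trans hy
    _ = (r : ℝ) ^ w.1 := by rw [Finset.prod_const, Finset.card_univ, Fintype.card_fin]

theorem exists_hasWordExpansion_of_analyticAt (hf : AnalyticAt 𝕜 f 0) :
    ∃ c, HasWordExpansion f c := by
  classical
  obtain ⟨p, R, hp⟩ := hf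
  obtain ⟨R', hR'0, hR'⟩ := ENNReal.lt_iff_exists_nnreal_btwn.1 hp.r_pos
  set r : ℝ≥0 := R' / (Fintype.card σ + 1)
  have hr0 : 0 < r := div_pos (ENNReal.coe_pos.1 hR'0) (by positivity)
  have hle : Fintype.card σ * r ≤ R' :=
    calc Fintype.card σ * r ≤ (Fintype.card σ + 1) * r := by gcongr; exact le_self_add
      _ = R' := mul_div_cancel₀ _ (by positivity)
  have hc := summable_norm_apply_single_mul_pow p (r := r)
    ((p.summable_norm_mul_pow (hR'.trans_le hp.r_le)).of_nonneg_of_le (fun N => by positivity)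
      fun N => by gcongr; exact_mod_cast hle)
  refine ⟨_, r, hr0, hc, ?_⟩
  have hpf : ∀ᶠ y in 𝓝 (0 : σ → 𝕜), HasSum (fun N => p N fun _ => y) (f y) := by
    simpa using hp.eventually_hasSum
  filter_upwards [hpf, Metric.closedBall_mem_nhds 0 (NNReal.coe_pos.2 hr0)] with y hfy hy
  have hsum := (summable_mul_prod_of_norm_le hc (mem_closedBall_zero_iff.1 hy)).hasSum
  have hfib := hsum.sigma fun N => hasSum_fintype _
  simp only [← apply_diag_eq_sum] at hfib
  rwa [hfy.unique hfib]

theorem norm_wordMultilinear_le {N : ℕ} (w : Fin N → σ) : ‖wordMultilinear (𝕜 := 𝕜) w‖ ≤ 1 := by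
  refine ContinuousMultilinearMap.opNorm_le_bound zero_le_one fun x => ?_
  rw [wordMultilinear_apply, one_mul, norm_prod]
  exact Finset.prod_le_prod (fun _ _ => norm_nonneg _) fun k _ => norm_le_pi_norm _ _

theorem HasWordExpansion.analyticAt {c : (Σ N, Fin N → σ) → 𝕜} (hf : HasWordExpansion f c) :
    AnalyticAt 𝕜 f 0 := by
  obtain ⟨r, hr, hc, hf⟩ := hf
  set p : FormalMultilinearSeries 𝕜 (σ → 𝕜) 𝕜 := fun N => ∑ w, c ⟨N, w⟩ • wordMultilinear w
  have hnorm (N : ℕ) : ‖p N‖ ≤ ∑ w : Fin N → σ, ‖c ⟨N, w⟩‖ :=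
    (norm_sum_le _ _).trans (Finset.sum_le_sum fun w _ => by
      rw [norm_smul]
      exact mul_le_of_le_one_right (norm_nonneg _) (norm_wordMultilinear_le w))
  have hrad : r ≤ p.radius := by
    refine p.le_radius_of_summable (((summable_sigma_of_nonneg fun w => by positivity).1 hc).2
      |>.of_nonneg_of_le (fun _ => by positivity) fun N => ?_)
    calc ‖p N‖ * (r : ℝ) ^ N ≤ (∑ w : Fin N → σ, ‖c ⟨N, w⟩‖) * (r : ℝ) ^ N := by
          gcongr
          exact hnorm N
      _ = ∑' w : Fin N → σ, ‖c ⟨N, w⟩‖ * (r : ℝ) ^ N := by rw [tsum_fintype, Finset.sum_mul]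
  have hsum : ∀ᶠ y in 𝓝 (0 : σ → 𝕜), HasSum (fun N => p N fun _ => y) (f y) := by
    filter_upwards [hf] with y hy
    refine (hy.sigma fun N => hasSum_fintype _).congr_fun fun N => ?_
    simp [p, wordMultilinear_apply]
  have hp := p.hasFPowerSeriesOnBall ((ENNReal.coe_pos.2 hr).trans_le hrad)
  exact hp.analyticAt.congr (hsum.mono fun y hy => hy.tsum_eq)

theorem analyticAt_zero_iff_exists_hasExpansion :
    AnalyticAt 𝕜 f 0 ↔ ∃ F, HasExpansion f F := by
  refine ⟨fun hf => ?_, fun ⟨F, hF⟩ => ?_⟩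
  · obtain ⟨c, hc⟩ := exists_hasWordExpansion_of_analyticAt hf
    exact ⟨_, hc.hasExpansion⟩
  · obtain ⟨c, hc⟩ := hF.exists_hasWordExpansion
    exact hc.analyticAt

end Word

/-! ### Coordinates at a point of the initial hypersurface -/

section Chart

variable {ι 𝕜 : Type*} [RCLike 𝕜]

/-- The coordinates of `𝕜 × (ι → 𝕜)` centred at the point `(0, x₀)`, with `none` as the index of the
time variable. -/
def chart (x₀ : ι → 𝕜) : (Option ι → 𝕜) ≃ₜ 𝕜 × (ι → 𝕜) where
  toFun y := (y none, fun i => x₀ i + y (some i))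
  invFun w o := o.elim w.1 fun i => w.2 i - x₀ i
  left_inv y := by ext (_ | i) <;> simp
  right_inv w := by ext <;> simp
  continuous_toFun := by fun_prop
  continuous_invFun := continuous_pi fun o => by cases o <;> simp only [Option.elim] <;> fun_prop

variable (x₀ : ι → 𝕜)

theorem chart_apply (y : Option ι → 𝕜) : chart x₀ y = (y none, fun i => x₀ i + y (some i)) := rfl

theorem chart_zero : chart x₀ 0 = (0, x₀) := by simp [chart_apply]

theorem chart_update_none [DecidableEq ι] (y : Option ι → 𝕜) (s : 𝕜) :
    chart x₀ (Function.update y none s) = (s, (chart x₀ y).2) := by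
  simp [chart_apply]

theorem chart_update_some [DecidableEq ι] (y : Option ι → 𝕜) (i : ι) (s : 𝕜) :
    chart x₀ (Function.update y (some i) s) =
      ((chart x₀ y).1, Function.update (chart x₀ y).2 i (x₀ i + s)) := by
  ext j
  · simp [chart_apply]
  · by_cases hj : j = i
    · subst hj
      simp [chart_apply]
    · simp [chart_apply, hj]

theorem eventually_nhds_iff_chart {P : 𝕜 × (ι → 𝕜) → Prop} :
    (∀ᶠ w in 𝓝 (0, x₀), P w) ↔ ∀ᶠ y in 𝓝 0, P (chart x₀ y) := by
  rw [← chart_zero, ← (chart x₀).map_nhds_eq, Filter.eventually_map]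

theorem analyticAt_comp_chart_iff [Fintype ι] {u : 𝕜 × (ι → 𝕜) → 𝕜} :
    AnalyticAt 𝕜 (u ∘ chart x₀) 0 ↔ AnalyticAt 𝕜 u (0, x₀) := by
  have hproj (o : Option ι) : AnalyticAt 𝕜 (fun y : Option ι → 𝕜 => y o) 0 :=
    (ContinuousLinearMap.proj o : (Option ι → 𝕜) →L[𝕜] 𝕜).analyticAt 0
  have hchart : AnalyticAt 𝕜 (chart x₀) 0 :=
    (hproj none).prod (.pi fun i => analyticAt_const.add (hproj (some i)))
  have hsymm : AnalyticAt 𝕜 (chart x₀).symm (0, x₀) := .pi fun o => by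
    cases o with
    | none => exact analyticAt_fst
    | some i =>
      exact ((ContinuousLinearMap.proj i : (ι → 𝕜) →L[𝕜] 𝕜).analyticAt _ |>.comp
        analyticAt_snd).sub analyticAt_const
  constructor <;> intro h
  · have h' := h.comp_of_eq hsymm ((chart x₀).symm_apply_eq.2 (chart_zero x₀).symm)
    rwa [Function.comp_assoc, Homeomorph.self_comp_symm, Function.comp_id] at h'
  · exact h.comp_of_eq hchart (chart_zero x₀)

theorem analyticAt_iff_exists_hasExpansion_comp_chart [Fintype ι] {u : 𝕜 × (ι → 𝕜) → 𝕜} :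
    AnalyticAt 𝕜 u (0, x₀) ↔ ∃ F, HasExpansion (u ∘ chart x₀) F :=
  (analyticAt_comp_chart_iff x₀).symm.trans analyticAt_zero_iff_exists_hasExpansion

/-- The derivative of a function of `(t, x)` with respect to `t`. -/
noncomputable def timeDeriv (u : 𝕜 × (ι → 𝕜) → 𝕜) (w : 𝕜 × (ι → 𝕜)) : 𝕜 :=
  deriv (fun s => u (s, w.2)) w.1

theorem timeDeriv_comp_chart [DecidableEq ι] (u : 𝕜 × (ι → 𝕜) → 𝕜) :
    timeDeriv u ∘ chart x₀ = partialDeriv none (u ∘ chart x₀) := by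
  funext y
  simp only [Function.comp_apply, timeDeriv, partialDeriv, chart_update_none]
  rfl

/-- The derivative of a function of `(t, x)` with respect to `x i`. -/
noncomputable def spaceDeriv [DecidableEq ι] (i : ι) (u : 𝕜 × (ι → 𝕜) → 𝕜) (w : 𝕜 × (ι → 𝕜)) : 𝕜 :=
  deriv (fun s => u (w.1, Function.update w.2 i s)) (w.2 i)

theorem spaceDeriv_comp_chart [DecidableEq ι] (i : ι) (u : 𝕜 × (ι → 𝕜) → 𝕜) :
    spaceDeriv i u ∘ chart x₀ = partialDeriv (some i) (u ∘ chart x₀) := by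
  funext y
  simp only [Function.comp_apply, spaceDeriv, partialDeriv, chart_update_some]
  exact (deriv_comp_const_add (fun s => u ((chart x₀ y).1, Function.update (chart x₀ y).2 i s))
    (x₀ i) (y (some i))).symm

end Chart

/-! ### Local solutions -/

section LocalSolution

variable {ι κ 𝕜 : Type*} [RCLike 𝕜]

section InitialValue

variable [Finite ι] {x₀ : ι → 𝕜} {u : 𝕜 × (ι → 𝕜) → 𝕜} {F : MvPowerSeries (Option ι) 𝕜}

theorem HasExpansion.timeDeriv (hu : HasExpansion (u ∘ chart x₀) F) :
    HasExpansion (timeDeriv u ∘ chart x₀) (pderiv 𝕜 none F) :=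
  open Classical in timeDeriv_comp_chart x₀ u ▸ hu.partialDeriv none

theorem eventually_initial_iff {v₀ : (ι → 𝕜) → 𝕜} {G : MvPowerSeries (Option ι) 𝕜}
    (hG : HasExpansion ((fun w => v₀ w.2) ∘ chart x₀) G) (hu : HasExpansion (u ∘ chart x₀) F) :
    (∀ᶠ x in 𝓝 x₀, u (0, x) = v₀ x) ↔ X none ∣ F - G := by
  classical
  rw [hu.X_dvd_sub_iff hG, ← map_snd_nhds ((0 : 𝕜), x₀), Filter.eventually_map,
    eventually_nhds_iff_chart]
  simp only [Function.comp_apply, chart_update_none]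

theorem HasExpansion.pderiv_none_eq_zero {v₀ : (ι → 𝕜) → 𝕜}
    (hF : HasExpansion ((fun w => v₀ w.2) ∘ chart x₀) F) : pderiv 𝕜 none F = 0 := by
  rw [← map_zero C]
  refine hF.timeDeriv.unique ((hasExpansion_C 0).congr (.of_forall fun y => ?_))
  simp [Fuchs.timeDeriv]

end InitialValue

variable [DecidableEq ι]

/-- The value of a factor at a function of `(t, x)`. -/
noncomputable def Factor.eval (u : 𝕜 × (ι → 𝕜) → 𝕜) : Factor ι → 𝕜 × (ι → 𝕜) → 𝕜
  | val => u
  | euler => fun w => w.1 * timeDeriv u w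
  | eulerSq => fun w => w.1 * timeDeriv u w ^ 2
  | dx i => spaceDeriv i u
  | eulerDx i => fun w => w.1 * spaceDeriv i (timeDeriv u) w
  | dxx i j => spaceDeriv i (spaceDeriv j u)

variable [Fintype κ]

/-- The function `u` satisfies at the point `w` the nonlinear Fuchsian equation of weight one
`t ∂ₜ² u + 2 ∂ₜ u = ∑ k, c k * ∏ φ ∈ e k, φ(u)`, whose right-hand side is a polynomial with
coefficients `c k` in the factors of `u`. -/
def IsSolutionAt (e : κ → List (Factor ι)) (c : κ → 𝕜 × (ι → 𝕜) → 𝕜) (u : 𝕜 × (ι → 𝕜) → 𝕜)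
    (w : 𝕜 × (ι → 𝕜)) : Prop :=
  w.1 * timeDeriv (timeDeriv u) w + 2 * timeDeriv u w =
    ∑ k, c k w * ((e k).map fun φ => φ.eval u w).prod

/-- The germ of `u` at `(0, x₀)` is an analytic solution of the Cauchy problem with data `v₀`. -/
structure IsLocalSolution [Fintype ι] (e : κ → List (Factor ι)) (c : κ → 𝕜 × (ι → 𝕜) → 𝕜)
    (v₀ : (ι → 𝕜) → 𝕜) (x₀ : ι → 𝕜) (u : 𝕜 × (ι → 𝕜) → 𝕜) : Prop where
  analyticAt : AnalyticAt 𝕜 u (0, x₀)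
  initial : ∀ᶠ x in 𝓝 x₀, u (0, x) = v₀ x
  equation : ∀ᶠ w in 𝓝 (0, x₀), IsSolutionAt e c u w

section Expansion

variable [Finite ι] {x₀ : ι → 𝕜} {u : 𝕜 × (ι → 𝕜) → 𝕜} {F : MvPowerSeries (Option ι) 𝕜}

theorem HasExpansion.spaceDeriv (hu : HasExpansion (u ∘ chart x₀) F) (i : ι) :
    HasExpansion (spaceDeriv i u ∘ chart x₀) (pderiv 𝕜 (some i) F) :=
  spaceDeriv_comp_chart x₀ i u ▸ hu.partialDeriv (some i)

theorem HasExpansion.factor_eval (hu : HasExpansion (u ∘ chart x₀) F) (φ : Factor ι) :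
    HasExpansion (φ.eval u ∘ chart x₀) (φ.series F) := by
  have ht : HasExpansion (fun y : Option ι → 𝕜 => y none) (X none) := hasExpansion_X none
  cases φ with
  | val => exact hu
  | euler => exact ht.mul hu.timeDeriv
  | eulerSq =>
    simp only [Factor.eval, Factor.series, sq]
    exact ht.mul (hu.timeDeriv.mul hu.timeDeriv)
  | dx i => exact hu.spaceDeriv i
  | eulerDx i => exact ht.mul (hu.timeDeriv.spaceDeriv i)
  | dxx i j => exact (hu.spaceDeriv j).spaceDeriv i

variable {e : κ → List (Factor ι)} {c : κ → 𝕜 × (ι → 𝕜) → 𝕜}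
  {C : κ → MvPowerSeries (Option ι) 𝕜}

theorem eventually_isSolutionAt_iff (hc : ∀ k, HasExpansion (c k ∘ chart x₀) (C k))
    (hu : HasExpansion (u ∘ chart x₀) F) :
    (∀ᶠ w in 𝓝 (0, x₀), IsSolutionAt e c u w) ↔ fuchsOp F = rhsSeries e C F := by
  have htwo : HasExpansion (fun _ : Option ι → 𝕜 => (2 : 𝕜)) 2 := hasExpansion_C 2
  have hleft := ((hasExpansion_X none).mul hu.timeDeriv.timeDeriv).add (htwo.mul hu.timeDeriv)
  have hright := HasExpansion.sum Finset.univ fun k =>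
    (hc k).mul (HasExpansion.list_prod hu.factor_eval (e k))
  rw [eventually_nhds_iff_chart]
  refine ⟨fun h => (hleft.congr h).unique hright, fun h => hleft.eventuallyEq ?_⟩
  rwa [← rhsSeries, ← h] at hright

theorem isLocalSolution_iff_exists_hasExpansion [Fintype ι] {v₀ : (ι → 𝕜) → 𝕜}
    {G : MvPowerSeries (Option ι) 𝕜} (hc : ∀ k, HasExpansion (c k ∘ chart x₀) (C k))
    (hG : HasExpansion ((fun w => v₀ w.2) ∘ chart x₀) G) :
    IsLocalSolution e c v₀ x₀ u ↔
      ∃ F, HasExpansion (u ∘ chart x₀) F ∧ fuchsOp F = rhsSeries e C F ∧ X none ∣ F - G := by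
  constructor
  · rintro ⟨hu, hv₀, heq⟩
    obtain ⟨F, hF⟩ := (analyticAt_iff_exists_hasExpansion_comp_chart x₀).1 hu
    exact ⟨F, hF, (eventually_isSolutionAt_iff hc hF).1 heq, (eventually_initial_iff hG hF).1 hv₀⟩
  · rintro ⟨F, hF, heq, hv₀⟩
    exact ⟨(analyticAt_iff_exists_hasExpansion_comp_chart x₀).2 ⟨F, hF⟩,
      (eventually_initial_iff hG hF).2 hv₀, (eventually_isSolutionAt_iff hc hF).2 heq⟩

end Expansion

section CauchyProblem

variable [Fintype ι] {e : κ → List (Factor ι)} {c : κ → 𝕜 × (ι → 𝕜) → 𝕜}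
  {v₀ : (ι → 𝕜) → 𝕜} {x₀ : ι → 𝕜} {u u' : 𝕜 × (ι → 𝕜) → 𝕜}

theorem exists_forall_isLocalSolution_iff (hc : ∀ k, AnalyticAt 𝕜 (c k) (0, x₀))
    (hv₀ : AnalyticAt 𝕜 v₀ x₀) :
    ∃ (C : κ → MvPowerSeries (Option ι) 𝕜) (G : MvPowerSeries (Option ι) 𝕜),
      (∀ k, IsConvergent (C k)) ∧ IsConvergent G ∧ pderiv 𝕜 none G = 0 ∧
      ∀ u, IsLocalSolution e c v₀ x₀ u ↔
        ∃ F, HasExpansion (u ∘ chart x₀) F ∧ fuchsOp F = rhsSeries e C F ∧ X none ∣ F - G := by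
  choose C hC using fun k => (analyticAt_iff_exists_hasExpansion_comp_chart x₀).1 (hc k)
  obtain ⟨G, hG⟩ := (analyticAt_iff_exists_hasExpansion_comp_chart x₀).1
    (hv₀.comp_of_eq (analyticAt_snd (p := ((0 : 𝕜), x₀))) rfl)
  exact ⟨C, G, fun k => (hC k).1, hG.1, hG.pderiv_none_eq_zero,
    fun _ => isLocalSolution_iff_exists_hasExpansion hC hG⟩

theorem exists_isLocalSolution (hc : ∀ k, AnalyticAt 𝕜 (c k) (0, x₀)) (hv₀ : AnalyticAt 𝕜 v₀ x₀) :
    ∃ u, IsLocalSolution e c v₀ x₀ u := by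
  obtain ⟨C, G, hC, hG, hG', hiff⟩ := exists_forall_isLocalSolution_iff (e := e) hc hv₀
  obtain ⟨F, hF, heq, hFG⟩ := exists_fuchsOp_eq_rhsSeries e hC hG' hG
  refine ⟨(fun y => ∑' m, coeff m F * monomialEval m y) ∘ (chart x₀).symm,
    (hiff _).2 ⟨F, ?_, heq, hFG⟩⟩
  rw [Function.comp_assoc, Homeomorph.symm_comp_self, Function.comp_id]
  exact hF.hasExpansion

theorem IsLocalSolution.congr (hc : ∀ k, AnalyticAt 𝕜 (c k) (0, x₀)) (hv₀ : AnalyticAt 𝕜 v₀ x₀)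
    (hu : IsLocalSolution e c v₀ x₀ u) (h : u =ᶠ[𝓝 (0, x₀)] u') :
    IsLocalSolution e c v₀ x₀ u' := by
  obtain ⟨C, G, -, -, -, hiff⟩ := exists_forall_isLocalSolution_iff (e := e) hc hv₀
  obtain ⟨F, hF, hsol⟩ := (hiff u).1 hu
  exact (hiff u').2 ⟨F, hF.congr ((eventually_nhds_iff_chart x₀).1 h), hsol⟩

theorem IsLocalSolution.eventuallyEq (hc : ∀ k, AnalyticAt 𝕜 (c k) (0, x₀))
    (hv₀ : AnalyticAt 𝕜 v₀ x₀) (hu : IsLocalSolution e c v₀ x₀ u)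
    (hu' : IsLocalSolution e c v₀ x₀ u') : u =ᶠ[𝓝 (0, x₀)] u' := by
  obtain ⟨C, G, -, -, hG, hiff⟩ := exists_forall_isLocalSolution_iff (e := e) hc hv₀
  obtain ⟨F, hF, heq, hFG⟩ := (hiff u).1 hu
  obtain ⟨F', hF', heq', hFG'⟩ := (hiff u').1 hu'
  obtain rfl : F = F' := eq_of_fuchsOp_eq_rhsSeries e C hG heq hFG heq' hFG'
  exact (eventually_nhds_iff_chart x₀).2 (hF.eventuallyEq hF')

theorem IsLocalSolution.eventually (hu : IsLocalSolution e c v₀ x₀ u) :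
    ∀ᶠ x in 𝓝 x₀, IsLocalSolution e c v₀ x u := by
  have hcont : Filter.Tendsto (fun x : ι → 𝕜 => ((0 : 𝕜), x)) (𝓝 x₀) (𝓝 (0, x₀)) :=
    (Continuous.prodMk_right (0 : 𝕜)).tendsto x₀
  filter_upwards [hcont.eventually hu.analyticAt.eventually_analyticAt,
    hu.initial.eventually_nhds, hcont.eventually hu.equation.eventually_nhds] with x h₁ h₂ h₃
  exact ⟨h₁, h₂, h₃⟩

end CauchyProblem

end LocalSolution

/-! ### Gluing of analytic germs -/

section Gluing

variable {𝕜 E F : Type*} [NontriviallyNormedField 𝕜] [NormedAddCommGroup E] [NormedSpace ℝ E]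
  [NormedSpace 𝕜 E] [NormedAddCommGroup F] [NormedSpace 𝕜 F]

theorem eqOn_ball_inter_ball {f g : E → F} {a b : E} {r s : ℝ}
    (hf : AnalyticOnNhd 𝕜 f (Metric.ball a r)) (hg : AnalyticOnNhd 𝕜 g (Metric.ball b s))
    (hab : b ∈ Metric.ball a r) (hs : 0 < s) (hfg : f =ᶠ[𝓝 b] g) :
    Set.EqOn f g (Metric.ball a r ∩ Metric.ball b s) :=
  AnalyticOnNhd.eqOn_of_preconnected_of_eventuallyEq (hf.mono Set.inter_subset_left)
    (hg.mono Set.inter_subset_right) ((convex_ball a r).inter (convex_ball b s)).isPreconnected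
    ⟨hab, Metric.mem_ball_self hs⟩ hfg

theorem exists_forall_eventuallyEq_of_analyticAt [CompleteSpace F] {A : Set E} {u : E → E → F}
    (hu : ∀ a ∈ A, AnalyticAt 𝕜 (u a) a)
    (hcompat : ∀ a ∈ A, ∀ᶠ b in 𝓝 a, b ∈ A → u a =ᶠ[𝓝 b] u b) :
    ∃ v : E → F, ∀ a ∈ A, v =ᶠ[𝓝 a] u a := by
  have hball (a : A) := Metric.eventually_nhds_iff_ball.1
    ((hu a a.2).eventually_analyticAt.and (hcompat a a.2))
  choose ε hε hball using hball
  -- Of two balls of half radius that meet, the centre of one lies in the other ball of full radius.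
  have hle (a b : A) (hab : ε b ≤ ε a) {w : E} (ha : w ∈ Metric.ball (a : E) (ε a / 2))
      (hb : w ∈ Metric.ball (b : E) (ε b / 2)) : u a w = u b w := by
    have hba : (b : E) ∈ Metric.ball (a : E) (ε a) := by
      rw [Metric.mem_ball] at ha hb ⊢
      linarith [dist_triangle_left (b : E) a w]
    exact eqOn_ball_inter_ball (fun z hz => (hball a z hz).1) (fun z hz => (hball b z hz).1) hba
      (hε b) ((hball a b hba).2 b.2)
      ⟨Metric.ball_subset_ball (half_le_self (hε a).le) ha,
        Metric.ball_subset_ball (half_le_self (hε b).le) hb⟩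
  have hvalue (w : E) : ∃ z, ∀ a : A, w ∈ Metric.ball (a : E) (ε a / 2) → u a w = z := by
    by_cases h : ∃ b : A, w ∈ Metric.ball (b : E) (ε b / 2)
    · obtain ⟨b, hb⟩ := h
      exact ⟨u b w, fun a ha => (le_total (ε b) (ε a)).elim (fun hab => hle a b hab ha hb)
        fun hab => (hle b a hab hb ha).symm⟩
    · exact ⟨0, fun a ha => (h ⟨a, ha⟩).elim⟩
  choose v hv using hvalue
  refine ⟨v, fun a ha => ?_⟩
  filter_upwards [Metric.ball_mem_nhds a (half_pos (hε ⟨a, ha⟩))] with w hw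
  exact (hv w ⟨a, ha⟩ hw).symm

end Gluing

/-! ### The Cauchy problem -/

section CauchyProblem

variable {ι κ 𝕜 : Type*} [Fintype ι] [DecidableEq ι] [Fintype κ] [RCLike 𝕜]
  {e : κ → List (Factor ι)} {c : κ → 𝕜 × (ι → 𝕜) → 𝕜} {v₀ : (ι → 𝕜) → 𝕜} {V : Set (ι → 𝕜)}

theorem exists_forall_isLocalSolution (hc : ∀ k, ∀ x ∈ V, AnalyticAt 𝕜 (c k) (0, x))
    (hv₀ : AnalyticOnNhd 𝕜 v₀ V) : ∃ v, ∀ x ∈ V, IsLocalSolution e c v₀ x v := by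
  have hloc (x : ι → 𝕜) : ∃ u, x ∈ V → IsLocalSolution e c v₀ x u := by
    by_cases hx : x ∈ V
    · obtain ⟨u, hu⟩ := exists_isLocalSolution (fun k => hc k x hx) (hv₀ x hx)
      exact ⟨u, fun _ => hu⟩
    · exact ⟨0, fun h => (hx h).elim⟩
  choose u hu using hloc
  obtain ⟨v, hv⟩ := exists_forall_eventuallyEq_of_analyticAt (𝕜 := 𝕜)
    (A := {0} ×ˢ V) (u := fun a => u a.2) (by
      rintro ⟨_, x⟩ ⟨rfl, hx⟩
      exact (hu x hx).analyticAt) (by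
      rintro ⟨_, x⟩ ⟨rfl, hx⟩
      filter_upwards [continuousAt_snd.eventually (hu x hx).eventually]
      rintro ⟨_, x'⟩ hx' ⟨rfl, hx'V⟩
      exact hx'.eventuallyEq (fun k => hc k x' hx'V) (hv₀ x' hx'V) (hu x' hx'V))
  exact ⟨v, fun x hx => (hu x hx).congr (fun k => hc k x hx) (hv₀ x hx) (hv (0, x) ⟨rfl, hx⟩).symm⟩

theorem isLocalSolution_of_isSolutionAt (hV : IsOpen V) {Ω : Set (𝕜 × (ι → 𝕜))} (hΩ : IsOpen Ω)
    (hVΩ : {0} ×ˢ V ⊆ Ω) {u : 𝕜 × (ι → 𝕜) → 𝕜} (hu : AnalyticOnNhd 𝕜 u Ω)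
    (hu₀ : ∀ x ∈ V, u (0, x) = v₀ x) (heq : ∀ w ∈ Ω, IsSolutionAt e c u w) {x : ι → 𝕜}
    (hx : x ∈ V) : IsLocalSolution e c v₀ x u where
  analyticAt := hu _ (hVΩ ⟨rfl, hx⟩)
  initial := Filter.eventually_of_mem (hV.mem_nhds hx) hu₀
  equation := Filter.eventually_of_mem (hΩ.mem_nhds (hVΩ ⟨rfl, hx⟩)) heq

end CauchyProblem

section WeightOne

variable {n : ℕ}

/-- The index set of the terms of the equation in `SolvesFuchs`: its coefficients `α`, `β`, `p0`,
`r0`, `q0`, then `p`, `r`, `q1`, and finally `q2`, `s`. -/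
abbrev WeightOneTerm (n : ℕ) : Type :=
  Fin 5 ⊕ (Fin 3 × Fin n) ⊕ (Fin 2 × Fin n × Fin n)

/-- The factors of `v` in each term of the equation in `SolvesFuchs`. -/
def weightOneFactors : WeightOneTerm n → List (Factor (Fin n)) :=
  Sum.elim ![[], [.eulerSq], [.euler], [.val, .euler], [.val]]
    (Sum.elim (fun k => ![[.eulerDx k.2], [.dx k.2, .euler], [.dx k.2]] k.1)
      fun k => ![[.dxx k.2.1 k.2.2], [.dx k.2.1, .dx k.2.2]] k.1)

variable (α β p0 r0 q0 : ℝ → (Fin n → ℝ) → ℝ) (p r q1 : Fin n → ℝ → (Fin n → ℝ) → ℝ)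
  (q2 s : Fin n → Fin n → ℝ → (Fin n → ℝ) → ℝ)

/-- The coefficient of each term of the equation in `SolvesFuchs`. -/
def weightOneCoeff (k : WeightOneTerm n) (w : ℝ × (Fin n → ℝ)) : ℝ :=
  Sum.elim ![α, β, p0, r0, q0]
    (Sum.elim (fun k => ![p, r, q1] k.1 k.2) fun k => ![q2, s] k.1 k.2.1 k.2.2) k w.1 w.2

theorem solvesFuchs_iff_forall_isSolutionAt {v : ℝ → (Fin n → ℝ) → ℝ}
    {S : Set (ℝ × (Fin n → ℝ))} :
    SolvesFuchs α β p0 r0 q0 p r q1 q2 s v S ↔ ∀ w ∈ S,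
      IsSolutionAt weightOneFactors (weightOneCoeff α β p0 r0 q0 p r q1 q2 s)
        (fun w => v w.1 w.2) w := by
  rw [SolvesFuchs, Prod.forall]
  refine forall_congr' fun t => forall_congr' fun x => imp_congr_right fun _ => ?_
  refine Eq.congr rfl ?_
  simp only [weightOneFactors, weightOneCoeff, Fintype.sum_sum_type, Fintype.sum_prod_type,
    Fin.sum_univ_five, Fin.sum_univ_three, Fin.sum_univ_two, Sum.elim_inl, Sum.elim_inr,
    Matrix.cons_val, List.map_nil, List.map_cons, List.prod_nil, List.prod_cons, mul_one,
    Factor.eval, ptd, pxd, timeDeriv, spaceDeriv, mul_add, add_mul, Finset.mul_sum, Finset.sum_mul]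
  simp only [mul_left_comm t, mul_assoc]
  ring

variable {α β p0 r0 q0 p r q1 q2 s}

theorem analyticAt_weightOneCoeff {w : ℝ × (Fin n → ℝ)}
    (h₀ : ∀ k : Fin 5, AnalyticAt ℝ (fun z : ℝ × (Fin n → ℝ) => ![α, β, p0, r0, q0] k z.1 z.2) w)
    (h₁ : ∀ (k : Fin 3) (i : Fin n),
      AnalyticAt ℝ (fun z : ℝ × (Fin n → ℝ) => ![p, r, q1] k i z.1 z.2) w)
    (h₂ : ∀ (k : Fin 2) (i j : Fin n),
      AnalyticAt ℝ (fun z : ℝ × (Fin n → ℝ) => ![q2, s] k i j z.1 z.2) w)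
    (k : WeightOneTerm n) :
    AnalyticAt ℝ (weightOneCoeff α β p0 r0 q0 p r q1 q2 s k) w :=
  match k with
  | .inl k => h₀ k
  | .inr (.inl k) => h₁ k.1 k.2
  | .inr (.inr k) => h₂ k.1 k.2.1 k.2.2

end WeightOne

end Fuchs

open Fuchs in
theorem stmt1_general {ι κ 𝕜 : Type*} [Fintype ι] [DecidableEq ι] [Fintype κ] [RCLike 𝕜]
    {V : Set (ι → 𝕜)} (hV : IsOpen V) (e : κ → List (Factor ι)) {c : κ → 𝕜 × (ι → 𝕜) → 𝕜}
    (hc : ∀ k, ∀ x ∈ V, AnalyticAt 𝕜 (c k) (0, x)) {v₀ : (ι → 𝕜) → 𝕜}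
    (hv₀ : AnalyticOnNhd 𝕜 v₀ V) :
    ∃ Ω : Set (𝕜 × (ι → 𝕜)), IsOpen Ω ∧ {0} ×ˢ V ⊆ Ω ∧
      ∃ v : 𝕜 × (ι → 𝕜) → 𝕜,
        AnalyticOnNhd 𝕜 v Ω ∧ (∀ x ∈ V, v (0, x) = v₀ x) ∧ (∀ w ∈ Ω, IsSolutionAt e c v w) ∧
        ∀ (Ω' : Set (𝕜 × (ι → 𝕜))) (v' : 𝕜 × (ι → 𝕜) → 𝕜), IsOpen Ω' → {0} ×ˢ V ⊆ Ω' →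
          AnalyticOnNhd 𝕜 v' Ω' → (∀ x ∈ V, v' (0, x) = v₀ x) →
          (∀ w ∈ Ω', IsSolutionAt e c v' w) →
          ∃ Ω'' : Set (𝕜 × (ι → 𝕜)), IsOpen Ω'' ∧ {0} ×ˢ V ⊆ Ω'' ∧ ∀ w ∈ Ω'', v w = v' w := by
  obtain ⟨v, hv⟩ := exists_forall_isLocalSolution (e := e) hc hv₀
  refine ⟨{w | ∀ᶠ z in nhds w, AnalyticAt 𝕜 v z ∧ IsSolutionAt e c v z},
    isOpen_setOfPred_eventually_nhds, ?_, v, fun w hw => hw.self_of_nhds.1,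
    fun x hx => (hv x hx).initial.self_of_nhds, fun w hw => hw.self_of_nhds.2, ?_⟩
  · rintro ⟨_, x⟩ ⟨rfl, hx⟩
    exact (hv x hx).analyticAt.eventually_analyticAt.and (hv x hx).equation
  · intro Ω' v' hΩ' hVΩ' hv' hv₀' heq'
    refine ⟨{w | v =ᶠ[nhds w] v'}, isOpen_setOfPred_eventually_nhds, ?_,
      fun w hw => hw.self_of_nhds⟩
    rintro ⟨_, x⟩ ⟨rfl, hx⟩
    exact (hv x hx).eventuallyEq (fun k => hc k x hx) (hv₀ x hx)
      (isLocalSolution_of_isSolutionAt hV hΩ' hVΩ' hv' hv₀' heq' hx)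

/-- The Cauchy problem for the nonlinear Fuchsian equation of weight 1 with analytic data
`v(0,x) = v₀(x)` has a unique analytic solution near `{0} × V`. -/
theorem stmt1 {n : ℕ} (V : Set (Fin n → ℝ)) (hV : IsOpen V)
    (U : Set (ℝ × (Fin n → ℝ))) (hU : IsOpen U)
    (hSU : {p : ℝ × (Fin n → ℝ) | p.1 = 0 ∧ p.2 ∈ V} ⊆ U)
    (α β p0 r0 q0 : ℝ → (Fin n → ℝ) → ℝ)
    (p r q1 : Fin n → ℝ → (Fin n → ℝ) → ℝ) (q2 s : Fin n → Fin n → ℝ → (Fin n → ℝ) → ℝ)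
    (hα : AnalyticOnNhd ℝ (fun w : ℝ × (Fin n → ℝ) => α w.1 w.2) U)
    (hβ : AnalyticOnNhd ℝ (fun w : ℝ × (Fin n → ℝ) => β w.1 w.2) U)
    (hp0 : AnalyticOnNhd ℝ (fun w : ℝ × (Fin n → ℝ) => p0 w.1 w.2) U)
    (hr0 : AnalyticOnNhd ℝ (fun w : ℝ × (Fin n → ℝ) => r0 w.1 w.2) U)
    (hq0 : AnalyticOnNhd ℝ (fun w : ℝ × (Fin n → ℝ) => q0 w.1 w.2) U)
    (hp : ∀ i, AnalyticOnNhd ℝ (fun w : ℝ × (Fin n → ℝ) => p i w.1 w.2) U)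
    (hr : ∀ i, AnalyticOnNhd ℝ (fun w : ℝ × (Fin n → ℝ) => r i w.1 w.2) U)
    (hq1 : ∀ i, AnalyticOnNhd ℝ (fun w : ℝ × (Fin n → ℝ) => q1 i w.1 w.2) U)
    (hq2 : ∀ i j, AnalyticOnNhd ℝ (fun w : ℝ × (Fin n → ℝ) => q2 i j w.1 w.2) U)
    (hs : ∀ i j, AnalyticOnNhd ℝ (fun w : ℝ × (Fin n → ℝ) => s i j w.1 w.2) U)
    (v₀ : (Fin n → ℝ) → ℝ) (hv₀ : AnalyticOnNhd ℝ v₀ V) :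
    ∃ Ω : Set (ℝ × (Fin n → ℝ)), IsOpen Ω ∧
      {w : ℝ × (Fin n → ℝ) | w.1 = 0 ∧ w.2 ∈ V} ⊆ Ω ∧
      ∃ v : ℝ → (Fin n → ℝ) → ℝ,
        AnalyticOnNhd ℝ (fun w : ℝ × (Fin n → ℝ) => v w.1 w.2) Ω ∧
        (∀ x ∈ V, v 0 x = v₀ x) ∧
        SolvesFuchs α β p0 r0 q0 p r q1 q2 s v Ω ∧
        ∀ (Ω' : Set (ℝ × (Fin n → ℝ))) (v' : ℝ → (Fin n → ℝ) → ℝ),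
          IsOpen Ω' → {w : ℝ × (Fin n → ℝ) | w.1 = 0 ∧ w.2 ∈ V} ⊆ Ω' →
          AnalyticOnNhd ℝ (fun w : ℝ × (Fin n → ℝ) => v' w.1 w.2) Ω' →
          (∀ x ∈ V, v' 0 x = v₀ x) →
          SolvesFuchs α β p0 r0 q0 p r q1 q2 s v' Ω' →
          ∃ Ω'' : Set (ℝ × (Fin n → ℝ)), IsOpen Ω'' ∧
            {w : ℝ × (Fin n → ℝ) | w.1 = 0 ∧ w.2 ∈ V} ⊆ Ω'' ∧
            ∀ w ∈ Ω'', v w.1 w.2 = v' w.1 w.2 := by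
  have hcoeff (k : Fuchs.WeightOneTerm n) (x : Fin n → ℝ) (hx : x ∈ V) :
      AnalyticAt ℝ (Fuchs.weightOneCoeff α β p0 r0 q0 p r q1 q2 s k) (0, x) :=
    Fuchs.analyticAt_weightOneCoeff
      (by simpa [Fin.forall_fin_succ] using
        ⟨hα _ (hSU ⟨rfl, hx⟩), hβ _ (hSU ⟨rfl, hx⟩), hp0 _ (hSU ⟨rfl, hx⟩), hr0 _ (hSU ⟨rfl, hx⟩),
          hq0 _ (hSU ⟨rfl, hx⟩)⟩)
      (by simpa [Fin.forall_fin_succ] using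
        ⟨fun i => hp i _ (hSU ⟨rfl, hx⟩), fun i => hr i _ (hSU ⟨rfl, hx⟩),
          fun i => hq1 i _ (hSU ⟨rfl, hx⟩)⟩)
      (by simpa [Fin.forall_fin_succ] using
        ⟨fun i j => hq2 i j _ (hSU ⟨rfl, hx⟩), fun i j => hs i j _ (hSU ⟨rfl, hx⟩)⟩) k
  obtain ⟨Ω, hΩ, hVΩ, v, hv, hv0, hsol, huniq⟩ := stmt1_general hV Fuchs.weightOneFactors hcoeff hv₀
  exact ⟨Ω, hΩ, hVΩ, fun t x => v (t, x), hv, hv0,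
    (Fuchs.solvesFuchs_iff_forall_isSolutionAt ..).2 hsol, fun Ω' v' hΩ' hVΩ' hv' hv0' hsol' =>
      huniq Ω' (fun w => v' w.1 w.2) hΩ' hVΩ' hv' hv0'
        ((Fuchs.solvesFuchs_iff_forall_isSolutionAt ..).1 hsol')⟩
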